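/- For each ν ∈ (0, 1−α) there exist ε_ν > 0, a > 0 and a constant C > 0, all independent of ε and of the profile, such that every normalised self-similar profile φ_ε for K_ε with ε ∈ (0, ε_ν] satisfies φ_ε(x) ≤ C ω_{−α−ν,0}(x) e^{−ax} for almost every x ∈ (0,∞). -/

import Mathlib

open MeasureTheory Real Set Filter

noncomputable def weight (a b x : ℝ) : ℝ := if x ≤ 1 then x ^ a else x ^ b

noncomputable def Xnorm (a b : ℝ) (g : ℝ → ℝ) : ℝ :=
  ∫ x in Ioi (0:ℝ), |g x| * weight a b x

def MemX (a b : ℝ) (g : ℝ → ℝ) : Prop :=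
  IntegrableOn (fun x => g x * weight a b x) (Ioi 0)

noncomputable def Kern (ε : ℝ) (W : ℝ → ℝ → ℝ) (x y : ℝ) : ℝ := 2 + ε * W x y

def GoodW (α : ℝ) (W : ℝ → ℝ → ℝ) : Prop :=
  ContinuousOn (fun p : ℝ × ℝ => W p.1 p.2) (Ioi 0 ×ˢ Ioi 0) ∧
  (∀ x y : ℝ, 0 < x → 0 < y → W x y = W y x) ∧
  (∀ l x y : ℝ, 0 < l → 0 < x → 0 < y → W (l * x) (l * y) = W x y) ∧
  (∀ x y : ℝ, 0 < x → 0 < y → 0 ≤ W x y ∧ W x y ≤ (x / y) ^ α + (y / x) ^ α)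

def IsProfile (K : ℝ → ℝ → ℝ) (φ : ℝ → ℝ) : Prop :=
  LocallyIntegrableOn φ (Ioi 0) ∧
  (∀ᵐ x ∂(volume.restrict (Ioi (0:ℝ))), 0 ≤ φ x) ∧
  IntegrableOn (fun x => x * φ x) (Ioi 0) ∧
  (∀ᵐ x ∂(volume.restrict (Ioi (0:ℝ))),
    x ^ 2 * φ x = ∫ y in Ioo 0 x, ∫ z in Ioi (x - y), y * K y z * φ y * φ z)

def IsNormalised (φ : ℝ → ℝ) : Prop := ∫ x in Ioi (0:ℝ), x * φ x = 1

section

open scoped ENNReal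

structure Core (α ε : ℝ) (k : ℝ → ℝ → ℝ≥0∞) (μ : Measure ℝ) : Prop where
  hα0 : 0 < α
  hα1 : α < 1
  hε : 0 < ε
  pos : ∀ᵐ x ∂μ, 0 < x
  kmeas : Measurable (fun p : ℝ × ℝ => k p.1 p.2)
  ksymm : ∀ y z, k y z = k z y
  klow : ∀ y z, 0 < y → 0 < z → 2 ≤ k y z
  kup : ∀ y z, 0 < y → 0 < z → k y z ≤ ENNReal.ofReal (2 + ε * ((y / z) ^ α + (z / y) ^ α))
  mass : ∫⁻ x, ENNReal.ofReal x ∂μ = 1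
  weak : ∀ g : ℝ → ℝ≥0∞, Measurable g → ∫⁻ x, ENNReal.ofReal (x ^ 2) * g x ∂μ =
    ∫⁻ y, ∫⁻ z, ENNReal.ofReal y * k y z * (∫⁻ x in Ioo y (y + z), g x) ∂μ ∂μ

lemma symm2 (μ : Measure ℝ) [SFinite μ] (A : ℝ → ℝ → ℝ≥0∞)
    (hA : Measurable (fun p : ℝ × ℝ => A p.1 p.2)) :
    2 * ∫⁻ y, ∫⁻ z, A y z ∂μ ∂μ = ∫⁻ y, ∫⁻ z, (A y z + A z y) ∂μ ∂μ := by
  have h1 : ∀ y, Measurable (A y) := fun y => hA.comp (measurable_const.prodMk measurable_id)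
  have h2 : Measurable (fun y => ∫⁻ z, A y z ∂μ) := hA.lintegral_prod_right'
  calc 2 * ∫⁻ y, ∫⁻ z, A y z ∂μ ∂μ
      = ∫⁻ y, ∫⁻ z, A y z ∂μ ∂μ + ∫⁻ y, ∫⁻ z, A y z ∂μ ∂μ := two_mul _
    _ = ∫⁻ y, ∫⁻ z, A y z ∂μ ∂μ + ∫⁻ y, ∫⁻ z, A z y ∂μ ∂μ := by
        congr 1
        exact lintegral_lintegral_swap hA.aemeasurable
    _ = ∫⁻ y, (∫⁻ z, A y z ∂μ + ∫⁻ z, A z y ∂μ) ∂μ := (lintegral_add_left h2 _).symm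
    _ = _ := by
        congr 1; ext y
        exact (lintegral_add_left (h1 y) _).symm

/-- product bound -/
lemma prodint (μ : Measure ℝ) (f g : ℝ → ℝ≥0∞) (hf : Measurable f) (hg : Measurable g) :
    ∫⁻ y, ∫⁻ z, f y * g z ∂μ ∂μ = (∫⁻ y, f y ∂μ) * ∫⁻ z, g z ∂μ := by
  simp_rw [lintegral_const_mul _ hg]
  rw [lintegral_mul_const _ hf]

lemma mono2 (μ : Measure ℝ) (hpos : ∀ᵐ x ∂μ, 0 < x) (A B : ℝ → ℝ → ℝ≥0∞)
    (h : ∀ y z, 0 < y → 0 < z → A y z ≤ B y z) :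
    ∫⁻ y, ∫⁻ z, A y z ∂μ ∂μ ≤ ∫⁻ y, ∫⁻ z, B y z ∂μ ∂μ := by
  apply lintegral_mono_ae
  filter_upwards [hpos] with y hy
  apply lintegral_mono_ae
  filter_upwards [hpos] with z hz
  exact h y z hy hz

/-- lintegral over an interval via FTC -/
lemma lint_ftc (G g : ℝ → ℝ) (a b : ℝ) (hab : a ≤ b)
    (hd : ∀ x ∈ Icc a b, HasDerivAt G (g x) x) (hc : ContinuousOn g (Icc a b))
    (h0 : ∀ x ∈ Icc a b, 0 ≤ g x) :
    ∫⁻ x in Ioo a b, ENNReal.ofReal (g x) = ENNReal.ofReal (G b - G a) := by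
  have hi : IntervalIntegrable g volume a b := by
    apply ContinuousOn.intervalIntegrable; rwa [uIcc_of_le hab]
  rw [← intervalIntegral.integral_eq_sub_of_hasDerivAt (f := G) (f' := g)
    (by rwa [uIcc_of_le hab]) hi, intervalIntegral.integral_of_le hab,
    ofReal_integral_eq_lintegral_ofReal]
  · exact setLIntegral_congr Ioo_ae_eq_Ioc
  · exact (intervalIntegrable_iff_integrableOn_Ioc_of_le hab).1 hi
  · exact (ae_restrict_iff' measurableSet_Ioc).2 (ae_of_all _ fun x hx => h0 x ⟨hx.1.le, hx.2⟩)

variable {α ε : ℝ} {k : ℝ → ℝ → ℝ≥0∞} {μ : Measure ℝ}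

lemma Core.tail_fin (h : Core α ε k μ) {δ : ℝ} (hδ : 0 < δ) : μ (Ioi δ) < ∞ := by
  have h1 := mul_meas_ge_le_lintegral (μ := μ) ENNReal.measurable_ofReal (ENNReal.ofReal δ)
  have h3 : μ (Ioi δ) ≤ μ {x | ENNReal.ofReal δ ≤ ENNReal.ofReal x} := by
    apply measure_mono
    intro x hx
    exact ENNReal.ofReal_le_ofReal (le_of_lt hx)
  rw [h.mass] at h1
  have h4 : ENNReal.ofReal δ * μ (Ioi δ) ≤ 1 := (by gcongr : _ ≤ _).trans h1
  by_contra hc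
  rw [not_lt, top_le_iff] at hc
  rw [hc, ENNReal.mul_top (by simpa using hδ)] at h4
  simp at h4

lemma Core.sf (h : Core α ε k μ) : SFinite μ := by
  have e : μ = μ.restrict (⋃ n : ℕ, Ioi (1 / ((n : ℝ) + 1))) := by
    symm
    apply Measure.restrict_eq_self_of_ae_mem
    filter_upwards [h.pos] with x hx
    obtain ⟨n, hn⟩ := exists_nat_one_div_lt hx
    exact mem_iUnion.2 ⟨n, hn⟩
  have : SigmaFinite μ := by
    refine ⟨⟨⟨fun n => Iic 0 ∪ Ioi (1 / ((n : ℝ) + 1)), fun _ => trivial, ?_, ?_⟩⟩⟩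
    · intro n
      refine (measure_union_le _ _).trans_lt ?_
      have : μ (Iic 0) = 0 := by
        have := h.pos
        rw [ae_iff] at this
        convert this using 2
        ext x; simp
      rw [this, zero_add]
      exact h.tail_fin (by positivity)
    · ext x
      simp only [mem_iUnion, mem_univ, iff_true]
      by_cases hx : x ≤ 0
      · exact ⟨0, Or.inl hx⟩
      · obtain ⟨n, hn⟩ := exists_nat_one_div_lt (not_le.1 hx)
        exact ⟨n, Or.inr hn⟩
  infer_instance

lemma Core.tail_le (h : Core α ε k μ) {δ : ℝ} (hδ : 0 < δ) : μ (Ioi δ) ≤ 1 := by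
  have := h.sf
  have hw := h.weak ((Ioi δ).indicator fun x => ENNReal.ofReal ((x ^ 2)⁻¹))
    (Measurable.indicator (by fun_prop) measurableSet_Ioi)
  have hl : ∫⁻ x, ENNReal.ofReal (x ^ 2) *
      (Ioi δ).indicator (fun x => ENNReal.ofReal ((x ^ 2)⁻¹)) x ∂μ = μ (Ioi δ) := by
    rw [← lintegral_indicator_one measurableSet_Ioi]
    congr 1; ext x
    by_cases hx : x ∈ Ioi δ
    · rw [indicator_of_mem hx, indicator_of_mem hx, ← ENNReal.ofReal_mul (by positivity)]
      have : x ≠ 0 := (hδ.trans hx).ne'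
      rw [mul_inv_cancel₀ (by positivity)]; simp
    · rw [indicator_of_notMem hx, indicator_of_notMem hx, mul_zero]
  rw [hl] at hw
  set A : ℝ → ℝ → ℝ≥0∞ := fun y z =>
    (Ioi δ ×ˢ Ioi δ).indicator (fun p : ℝ × ℝ => ENNReal.ofReal (2 * (p.2 / (p.1 + p.2)))) (y, z) with hA
  have hAm : Measurable (fun p : ℝ × ℝ => A p.1 p.2) := by
    refine Measurable.indicator ?_ (measurableSet_Ioi.prod measurableSet_Ioi)
    fun_prop
  have h1 : ∫⁻ y, ∫⁻ z, A y z ∂μ ∂μ ≤ μ (Ioi δ) := by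
    rw [hw]
    refine mono2 μ h.pos A (fun y z => _) ?_
    intro y z hy hz
    by_cases hp : (y, z) ∈ Ioi δ ×ˢ Ioi δ
    · simp only [hA, indicator_of_mem hp]
      have hyz : δ < y := hp.1
      have e1 : ∫⁻ x in Ioo y (y + z), (Ioi δ).indicator (fun x => ENNReal.ofReal ((x ^ 2)⁻¹)) x
          = ENNReal.ofReal (-(y + z)⁻¹ - -y⁻¹) := by
        rw [← lint_ftc (fun x => -x⁻¹) (fun x => (x ^ 2)⁻¹) y (y + z) (by linarith)]
        · apply setLIntegral_congr_fun measurableSet_Ioo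
          intro x hx
          exact indicator_of_mem (hyz.trans hx.1) _
        · intro x hx
          have : x ≠ 0 := (hy.trans_le hx.1).ne'
          have h' := (hasDerivAt_inv this).neg
          rw [neg_neg] at h'
          exact h'
        · apply ContinuousOn.inv₀ (by fun_prop)
          intro x hx
          have : x ≠ 0 := (hy.trans_le hx.1).ne'
          positivity
        · intro x hx; positivity
      rw [e1]
      calc ENNReal.ofReal (2 * (z / (y + z)))
          = ENNReal.ofReal y * 2 * ENNReal.ofReal (-(y + z)⁻¹ - -y⁻¹) := by
            rw [← ENNReal.ofReal_ofNat 2, ← ENNReal.ofReal_mul hy.le, ← ENNReal.ofReal_mul (by positivity)]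
            congr 1; field_simp; ring
        _ ≤ _ := by gcongr; exact h.klow y z hy hz
    · simp only [hA, indicator_of_notMem hp]; exact zero_le
  have h2 := symm2 μ A hAm
  have h3 : ∫⁻ y, ∫⁻ z, (A y z + A z y) ∂μ ∂μ = 2 * (μ (Ioi δ) * μ (Ioi δ)) := by
    have : ∀ y z, A y z + A z y = (Ioi δ).indicator (fun _ => 2) y * (Ioi δ).indicator 1 z := by
      intro y z
      simp only [hA]
      by_cases hy : y ∈ Ioi δ <;> by_cases hz : z ∈ Ioi δ
      · rw [indicator_of_mem (show (y, z) ∈ Ioi δ ×ˢ Ioi δ from ⟨hy, hz⟩),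
          indicator_of_mem (show (z, y) ∈ Ioi δ ×ˢ Ioi δ from ⟨hz, hy⟩), indicator_of_mem hy, indicator_of_mem hz]
        have : 0 < y := hδ.trans hy
        have : 0 < z := hδ.trans hz
        simp only
        rw [← ENNReal.ofReal_add (by positivity) (by positivity)]
        rw [show 2 * (z / (y + z)) + 2 * (y / (z + y)) = 2 by field_simp; ring]
        simp
      all_goals
        clear hw hl hAm h1 h2
        simp only [mem_Ioi] at hy hz
        simp [hy, hz]
    simp_rw [this]
    rw [prodint _ _ _ (measurable_const.indicator measurableSet_Ioi)
      (measurable_one.indicator measurableSet_Ioi), lintegral_indicator_one measurableSet_Ioi,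
      lintegral_indicator_const measurableSet_Ioi]
    ring
  rw [h3] at h2
  have h4 : μ (Ioi δ) * μ (Ioi δ) ≤ μ (Ioi δ) := by
    have : 2 * (μ (Ioi δ) * μ (Ioi δ)) ≤ 2 * μ (Ioi δ) := by rw [← h2]; gcongr
    exact (ENNReal.mul_le_mul_iff_right (by simp) (by simp)).1 this
  have hf := h.tail_fin hδ
  by_contra hc
  rw [not_le] at hc
  have h5 : μ (Ioi δ) * 1 < μ (Ioi δ) * μ (Ioi δ) :=
    ENNReal.mul_lt_mul_right (by exact (zero_lt_one.trans hc).ne') hf.ne hc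
  rw [mul_one] at h5
  exact absurd h4 (not_le.2 h5)

lemma Core.m0 (h : Core α ε k μ) : μ univ ≤ 1 := by
  have e : μ univ = μ (⋃ n : ℕ, Ioi (1 / ((n : ℝ) + 1))) := by
    apply measure_congr
    filter_upwards [h.pos] with x hx
    obtain ⟨n, hn⟩ := exists_nat_one_div_lt hx
    have : x ∈ (⋃ n : ℕ, Ioi (1 / ((n : ℝ) + 1))) := mem_iUnion.2 ⟨n, hn⟩
    exact (eq_true trivial).trans (eq_true this).symm
  rw [e, Monotone.measure_iUnion]
  · exact iSup_le fun n => h.tail_le (by positivity)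
  · intro m n hmn
    apply Ioi_subset_Ioi
    apply one_div_le_one_div_of_le (by positivity)
    have : (m : ℝ) ≤ n := by exact_mod_cast hmn
    linarith

lemma Core.kup' (h : Core α ε k μ) (y z : ℝ) (hy : 0 < y) (hz : 0 < z) :
    k y z ≤ 2 + ENNReal.ofReal ε * (ENNReal.ofReal (y ^ α) * ENNReal.ofReal (z ^ (-α)) +
      ENNReal.ofReal (y ^ (-α)) * ENNReal.ofReal (z ^ α)) := by
  refine (h.kup y z hy hz).trans (le_of_eq ?_)
  have := h.hε
  rw [ENNReal.ofReal_add (by norm_num) (by positivity), ENNReal.ofReal_mul h.hε.le,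
    ENNReal.ofReal_add (by positivity) (by positivity), ← ENNReal.ofReal_mul (by positivity),
    ← ENNReal.ofReal_mul (by positivity), div_rpow hy.le hz.le, div_rpow hz.le hy.le,
    rpow_neg hy.le, rpow_neg hz.le, ENNReal.ofReal_ofNat, div_eq_mul_inv, div_eq_mul_inv,
    mul_comm (z ^ α) (y ^ α)⁻¹]

lemma Core.finm (h : Core α ε k μ) : IsFiniteMeasure μ := ⟨h.m0.trans_lt (by simp)⟩

lemma Core.int_id (h : Core α ε k μ) : Integrable (fun x => x) μ := by
  refine ⟨by fun_prop, ?_⟩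
  rw [hasFiniteIntegral_iff_ofReal (by filter_upwards [h.pos] with x hx using hx.le), h.mass]
  simp

lemma Core.int_one (h : Core α ε k μ) : ∫ x, x ∂μ = 1 := by
  rw [integral_eq_lintegral_of_nonneg_ae (by filter_upwards [h.pos] with x hx using hx.le)
    (by fun_prop), h.mass]
  simp

lemma one_sub_exp_le_rpow {t s : ℝ} (ht : 0 < t) (hs0 : 0 ≤ s) (hs1 : s ≤ 1) :
    1 - exp (-t) ≤ t ^ s := by
  by_cases h : t ≤ 1
  · have h1 : t ≤ t ^ s := by
      conv_lhs => rw [← rpow_one t]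
      exact rpow_le_rpow_of_exponent_ge ht h hs1
    have := add_one_le_exp (-t)
    linarith
  · have h1 : 1 ≤ t ^ s := one_le_rpow (not_le.1 h).le hs0
    have := exp_pos (-t)
    linarith

lemma rpow_le_one_add {x s : ℝ} (hx : 0 < x) (h0 : 0 ≤ s) (h1 : s ≤ 1) : x ^ s ≤ 1 + x := by
  by_cases h : x ≤ 1
  · have := rpow_le_one hx.le h h0
    linarith
  · have := rpow_le_rpow_of_exponent_le (not_le.1 h).le h1
    rw [rpow_one] at this
    linarith

lemma Core.lap_ineq_enn (h : Core α ε k μ) {q : ℝ} (hq : 0 < q) :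
    2 * ∫⁻ x, ENNReal.ofReal (1 - exp (-(q * x)) - q * x * exp (-(q * x))) ∂μ ≤
      2 * ((∫⁻ x, ENNReal.ofReal (1 - exp (-(q * x))) ∂μ) *
        (∫⁻ x, ENNReal.ofReal (1 - exp (-(q * x))) ∂μ)) +
      2 * (ENNReal.ofReal ε *
        ((∫⁻ x, ENNReal.ofReal (x ^ α * (1 - exp (-(q * x)))) ∂μ) *
         (∫⁻ x, ENNReal.ofReal (x ^ (-α) * (1 - exp (-(q * x)))) ∂μ))) := by
  have := h.sf
  have hnn : ∀ x : ℝ, 0 < x → 0 ≤ 1 - exp (-(q * x)) := fun x hx => by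
    have : exp (-(q * x)) ≤ 1 := exp_le_one_iff.2 (by nlinarith)
    linarith
  have hw := h.weak (fun x => ENNReal.ofReal ((1 - exp (-(q * x)) - q * x * exp (-(q * x))) / x ^ 2))
    (by fun_prop)
  set A : ℝ → ℝ → ℝ≥0∞ := fun y z => ENNReal.ofReal y * k y z *
    ENNReal.ofReal ((1 - exp (-(q * y))) / y - (1 - exp (-(q * (y + z)))) / (y + z)) with hA
  have hAm : Measurable (fun p : ℝ × ℝ => A p.1 p.2) := by
    have := h.kmeas
    simp only [hA]; fun_prop
  have h1 : ∫⁻ x, ENNReal.ofReal (1 - exp (-(q * x)) - q * x * exp (-(q * x))) ∂μ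
      = ∫⁻ x, ENNReal.ofReal (x ^ 2) *
       ENNReal.ofReal ((1 - exp (-(q * x)) - q * x * exp (-(q * x))) / x ^ 2) ∂μ := by
    apply lintegral_congr_ae
    filter_upwards [h.pos] with x hx
    rw [← ENNReal.ofReal_mul (by positivity)]
    congr 1; field_simp
  have h2 : ∫⁻ y, ∫⁻ z, ENNReal.ofReal y * k y z * (∫⁻ x in Ioo y (y + z),
      ENNReal.ofReal ((1 - exp (-(q * x)) - q * x * exp (-(q * x))) / x ^ 2)) ∂μ ∂μ
      ≤ ∫⁻ y, ∫⁻ z, A y z ∂μ ∂μ := by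
    refine mono2 μ h.pos (fun y z => _) A ?_
    intro y z hy hz
    rw [lint_ftc (fun x => - ((1 - exp (-(q * x))) / x)) _ y (y + z) (by linarith)]
    · simp only [hA]
      apply le_of_eq
      congr 2
      ring
    · intro x hx
      have hx0 : x ≠ 0 := (hy.trans_le hx.1).ne'
      have e1 : HasDerivAt (fun x : ℝ => exp (-(q * x))) (exp (-(q * x)) * (-(q * 1))) x :=
        (((hasDerivAt_id x).const_mul q).neg).exp
      have e2 := (((e1.const_sub 1).div (hasDerivAt_id x) hx0)).neg
      refine e2.congr_deriv ?_
      simp only [id]; ring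
    · intro x hx
      have hx0 : x ≠ 0 := (hy.trans_le hx.1).ne'
      apply ContinuousAt.continuousWithinAt
      apply ContinuousAt.div (by fun_prop) (by fun_prop) (by positivity)
    · intro x hx
      have hx0 : 0 < x := (hy.trans_le hx.1)
      apply div_nonneg _ (by positivity)
      have e := add_one_le_exp (q * x)
      have e2 : exp (-(q * x)) * exp (q * x) = 1 := by rw [← exp_add]; simp
      have := exp_pos (-(q * x))
      nlinarith
  rw [h1, hw]
  have h3 := symm2 μ A hAm
  calc _ ≤ 2 * ∫⁻ y, ∫⁻ z, A y z ∂μ ∂μ := by gcongr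
    _ = _ := h3
    _ ≤ ∫⁻ y, ∫⁻ z, ((2 * ENNReal.ofReal (1 - exp (-(q * y)))) * ENNReal.ofReal (1 - exp (-(q * z))) +
         ((ENNReal.ofReal ε * ENNReal.ofReal (y ^ α * (1 - exp (-(q * y))))) *
           ENNReal.ofReal (z ^ (-α) * (1 - exp (-(q * z)))) +
         (ENNReal.ofReal ε * ENNReal.ofReal (y ^ (-α) * (1 - exp (-(q * y))))) *
           ENNReal.ofReal (z ^ α * (1 - exp (-(q * z)))))) ∂μ ∂μ := by
        refine mono2 μ h.pos (fun y z => A y z + A z y) (fun y z => _) ?_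
        intro y z hy hz
        have mono : ∀ a b : ℝ, 0 < a → 0 < b →
            (1 - exp (-(q * (a + b)))) / (a + b) ≤ (1 - exp (-(q * a))) / a := by
          intro a b ha hb
          rw [div_le_div_iff₀ (by positivity) ha]
          have e := add_one_le_exp (q * a)
          have e2 : exp (-(q * a)) * exp (q * a) = 1 := by rw [← exp_add]; simp
          have e3 : exp (-(q * (a + b))) = exp (-(q * a)) * exp (-(q * b)) := by
            rw [← exp_add]; congr 1; ring
          have e4 := add_one_le_exp (-(q * b))
          have e5 := exp_pos (-(q * a))
          have e6 : exp (-(q * a)) * (q * a + 1) ≤ 1 := by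
            calc _ ≤ exp (-(q * a)) * exp (q * a) := by gcongr
              _ = 1 := e2
          rw [e3]
          have e7 : exp (-(q * a)) * (1 - q * b) ≤ exp (-(q * a)) * exp (-(q * b)) := by
            gcongr; linarith
          nlinarith [mul_le_mul_of_nonneg_left e7 ha.le, mul_le_mul_of_nonneg_left e6 hb.le]
        have e1 : A y z + A z y = k y z * (ENNReal.ofReal (1 - exp (-(q * y))) *
            ENNReal.ofReal (1 - exp (-(q * z)))) := by
          simp only [hA]
          rw [h.ksymm z y, mul_comm (ENNReal.ofReal y), mul_comm (ENNReal.ofReal z), mul_assoc,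
            mul_assoc, ← mul_add, ← ENNReal.ofReal_mul hy.le, ← ENNReal.ofReal_mul hz.le,
            ← ENNReal.ofReal_add, ← ENNReal.ofReal_mul (hnn y hy)]
          · congr 2
            have e3 : exp (-(q * (y + z))) = exp (-(q * y)) * exp (-(q * z)) := by
              rw [← exp_add]; congr 1; ring
            rw [add_comm z y, e3]
            field_simp; ring
          · exact mul_nonneg hy.le (sub_nonneg.2 (mono y z hy hz))
          · exact mul_nonneg hz.le (sub_nonneg.2 (mono z y hz hy))
        simp only [e1]
        refine (mul_le_mul_left (h.kup' y z hy hz) _).trans (le_of_eq ?_)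
        rw [ENNReal.ofReal_mul (by positivity), ENNReal.ofReal_mul (by positivity),
          ENNReal.ofReal_mul (by positivity), ENNReal.ofReal_mul (by positivity)]
        ring
    _ = _ := by
        have meas1 : Measurable fun x : ℝ => ENNReal.ofReal (1 - exp (-(q * x))) := by fun_prop
        have meas2 : Measurable fun x : ℝ => ENNReal.ofReal (x ^ α * (1 - exp (-(q * x)))) := by
          fun_prop
        have meas3 : Measurable fun x : ℝ => ENNReal.ofReal (x ^ (-α) * (1 - exp (-(q * x)))) := by
          fun_prop
        have E : ∀ y, ∫⁻ z, ((2 * ENNReal.ofReal (1 - exp (-(q * y)))) * ENNReal.ofReal (1 - exp (-(q * z))) +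
         ((ENNReal.ofReal ε * ENNReal.ofReal (y ^ α * (1 - exp (-(q * y))))) *
           ENNReal.ofReal (z ^ (-α) * (1 - exp (-(q * z)))) +
         (ENNReal.ofReal ε * ENNReal.ofReal (y ^ (-α) * (1 - exp (-(q * y))))) *
           ENNReal.ofReal (z ^ α * (1 - exp (-(q * z)))))) ∂μ =
           (2 * ENNReal.ofReal (1 - exp (-(q * y)))) * (∫⁻ z, ENNReal.ofReal (1 - exp (-(q * z))) ∂μ) +
         ((ENNReal.ofReal ε * ENNReal.ofReal (y ^ α * (1 - exp (-(q * y))))) *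
           (∫⁻ z, ENNReal.ofReal (z ^ (-α) * (1 - exp (-(q * z)))) ∂μ) +
         (ENNReal.ofReal ε * ENNReal.ofReal (y ^ (-α) * (1 - exp (-(q * y))))) *
           (∫⁻ z, ENNReal.ofReal (z ^ α * (1 - exp (-(q * z)))) ∂μ)) := by
          intro y
          rw [lintegral_add_left (by fun_prop), lintegral_add_left (by fun_prop),
            lintegral_const_mul _ meas1, lintegral_const_mul _ meas2, lintegral_const_mul _ meas3]
        simp_rw [E]
        rw [lintegral_add_left (by fun_prop), lintegral_add_left (by fun_prop),
          lintegral_mul_const _ (by fun_prop), lintegral_mul_const _ (by fun_prop),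
          lintegral_mul_const _ (by fun_prop), lintegral_const_mul _ meas1,
          lintegral_const_mul _ meas2, lintegral_const_mul _ meas3]
        ring

lemma Core.int_exp (h : Core α ε k μ) {q : ℝ} (hq : 0 ≤ q) :
    Integrable (fun x => exp (-(q * x))) μ := by
  have := h.finm
  refine Integrable.mono' (integrable_const 1) (by fun_prop) ?_
  filter_upwards [h.pos] with x hx
  rw [norm_of_nonneg (exp_pos _).le]
  exact exp_le_one_iff.2 (by nlinarith)

lemma Core.int_xexp (h : Core α ε k μ) {q : ℝ} (hq : 0 ≤ q) :
    Integrable (fun x => x * exp (-(q * x))) μ := by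
  refine Integrable.mono' h.int_id (by fun_prop) ?_
  filter_upwards [h.pos] with x hx
  rw [norm_of_nonneg (by positivity)]
  have : exp (-(q * x)) ≤ 1 := exp_le_one_iff.2 (by nlinarith)
  nlinarith

lemma Core.lap_ineq (h : Core α ε k μ) {q : ℝ} (hq : 0 < q) :
    (∫ x, (1 - exp (-(q * x))) ∂μ) - q * ∫ x, x * exp (-(q * x)) ∂μ ≤
      (∫ x, (1 - exp (-(q * x))) ∂μ) ^ 2 + 2 * ε * q ^ (2 - α) := by
  have hfin := h.finm
  have hα0 := h.hα0
  have hα1 := h.hα1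
  have hε := h.hε
  have hnn : ∀ x : ℝ, 0 < x → 0 ≤ 1 - exp (-(q * x)) := fun x hx => by
    have : exp (-(q * x)) ≤ 1 := exp_le_one_iff.2 (by nlinarith)
    linarith
  have i1 : Integrable (fun x => 1 - exp (-(q * x))) μ := (integrable_const 1).sub (h.int_exp hq.le)
  have i2 : Integrable (fun x => q * x * exp (-(q * x))) μ := by
    simp_rw [mul_assoc]; exact (h.int_xexp hq.le).const_mul q
  have main := h.lap_ineq_enn hq
  rw [← mul_add] at main
  have main' := (ENNReal.mul_le_mul_iff_right (by simp) (by simp)).1 main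
  have e1 : ∫⁻ x, ENNReal.ofReal (1 - exp (-(q * x)) - q * x * exp (-(q * x))) ∂μ =
      ENNReal.ofReal ((∫ x, (1 - exp (-(q * x))) ∂μ) - q * ∫ x, x * exp (-(q * x)) ∂μ) := by
    have i3 : Integrable (fun x => 1 - exp (-(q * x)) - q * x * exp (-(q * x))) μ := i1.sub i2
    rw [← ofReal_integral_eq_lintegral_ofReal i3, integral_sub i1 i2]
    · simp_rw [mul_assoc]; rw [integral_const_mul]
    · filter_upwards [h.pos] with x hx
      have e := add_one_le_exp (q * x)
      have e2 : exp (-(q * x)) * exp (q * x) = 1 := by rw [← exp_add]; simp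
      have := exp_pos (-(q * x))
      simp only [Pi.zero_apply]
      nlinarith
  have e2 : ∫⁻ x, ENNReal.ofReal (1 - exp (-(q * x))) ∂μ =
      ENNReal.ofReal (∫ x, (1 - exp (-(q * x))) ∂μ) := by
    rw [← ofReal_integral_eq_lintegral_ofReal i1]
    filter_upwards [h.pos] with x hx using hnn x hx
  have e3 : ∫⁻ x, ENNReal.ofReal (x ^ α * (1 - exp (-(q * x)))) ∂μ ≤ ENNReal.ofReal (q ^ (1 - α)) := by
    calc _ ≤ ∫⁻ x, ENNReal.ofReal (q ^ (1 - α)) * ENNReal.ofReal x ∂μ := by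
          apply lintegral_mono_ae
          filter_upwards [h.pos] with x hx
          rw [← ENNReal.ofReal_mul (by positivity)]
          apply ENNReal.ofReal_le_ofReal
          have := one_sub_exp_le_rpow (t := q * x) (s := 1 - α) (by positivity) (by linarith) (by linarith)
          calc _ ≤ x ^ α * (q * x) ^ (1 - α) := by gcongr
            _ = _ := by
              rw [mul_rpow hq.le hx.le, mul_left_comm, ← rpow_add hx]; simp
      _ = _ := by rw [lintegral_const_mul _ (by fun_prop), h.mass, mul_one]
  have e4 : ∫⁻ x, ENNReal.ofReal (x ^ (-α) * (1 - exp (-(q * x)))) ∂μ ≤ ENNReal.ofReal (2 * q) := by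
    calc _ ≤ ∫⁻ x, ENNReal.ofReal q * (1 + ENNReal.ofReal x) ∂μ := by
          apply lintegral_mono_ae
          filter_upwards [h.pos] with x hx
          rw [← ENNReal.ofReal_one, ← ENNReal.ofReal_add (by norm_num) hx.le,
            ← ENNReal.ofReal_mul hq.le]
          apply ENNReal.ofReal_le_ofReal
          have := one_sub_exp_le_rpow (t := q * x) (s := 1) (by positivity) (by linarith) (by linarith)
          have h5 := rpow_le_one_add (x := x) (s := 1 - α) hx (by linarith) (by linarith)
          calc _ ≤ x ^ (-α) * (q * x) ^ (1 : ℝ) := by gcongr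
            _ = q * x ^ (1 - α) := by
              rw [rpow_one, mul_left_comm]
              congr 1
              rw [show 1 - α = -α + 1 by ring, rpow_add hx, rpow_one]
            _ ≤ _ := by gcongr
      _ = ENNReal.ofReal q * (μ univ + 1) := by
          rw [lintegral_const_mul _ (by fun_prop), lintegral_add_left (by fun_prop), h.mass]; simp
      _ ≤ ENNReal.ofReal q * (1 + 1) := by gcongr; exact h.m0
      _ = _ := by rw [mul_comm, ENNReal.ofReal_mul (by norm_num)]; norm_num
  rw [e1, e2] at main'
  have hQ : 0 ≤ ∫ x, (1 - exp (-(q * x))) ∂μ := by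
    apply integral_nonneg_of_ae
    filter_upwards [h.pos] with x hx using hnn x hx
  have fin : ENNReal.ofReal ((∫ x, (1 - exp (-(q * x))) ∂μ) - q * ∫ x, x * exp (-(q * x)) ∂μ) ≤
      ENNReal.ofReal ((∫ x, (1 - exp (-(q * x))) ∂μ) ^ 2 + 2 * ε * q ^ (2 - α)) := by
    refine main'.trans ?_
    rw [ENNReal.ofReal_add (by positivity) (by positivity), sq, ENNReal.ofReal_mul hQ]
    gcongr
    calc _ ≤ ENNReal.ofReal ε * (ENNReal.ofReal (q ^ (1 - α)) * ENNReal.ofReal (2 * q)) := by gcongr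
      _ = _ := by
        rw [← ENNReal.ofReal_mul (by positivity), ← ENNReal.ofReal_mul (by positivity)]
        congr 1
        rw [show 2 - α = (1 - α) + 1 by ring, rpow_add hq, rpow_one]
        ring
  exact (ENNReal.ofReal_le_ofReal_iff (by positivity)).1 fin

lemma Core.Q_lower (h : Core α ε k μ) {L : ℝ} (hL : 0 < L) :
    L / (1 + L) - 2 * ε / (1 - α) * L ^ (2 - α) ≤ ∫ x, (1 - exp (-(L * x))) ∂μ := by
  have hfin := h.finm
  have hα0 := h.hα0
  have hα1 := h.hα1
  have hε := h.hε
  set Q : ℝ → ℝ := fun q => ∫ x, (1 - exp (-(q * x))) ∂μ with hQdef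
  set c : ℝ := 2 * ε / (1 - α) with hc
  have hc0 : 0 < c := div_pos (by positivity) (by linarith)
  have hQ : ∀ q, 0 < q → 0 ≤ Q q := by
    intro q hq
    apply integral_nonneg_of_ae
    filter_upwards [h.pos] with x hx
    have : exp (-(q * x)) ≤ 1 := exp_le_one_iff.2 (by nlinarith)
    simp only [Pi.zero_apply]; linarith
  have hd : ∀ q, 0 < q → HasDerivAt Q (∫ x, x * exp (-(q * x)) ∂μ) q := by
    intro q hq
    refine (hasDerivAt_integral_of_dominated_loc_of_deriv_le (μ := μ) (bound := fun x => x)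
      (F := fun q x => 1 - exp (-(q * x))) (F' := fun q x => x * exp (-(q * x)))
      (s := Ioi 0) (Ioi_mem_nhds hq) ?_ ?_ ?_ ?_ h.int_id ?_).2
    · exact Eventually.of_forall fun q => by fun_prop
    · exact (integrable_const 1).sub (h.int_exp hq.le)
    · fun_prop
    · filter_upwards [h.pos] with x hx q hq
      rw [norm_of_nonneg (by positivity)]
      have hq' : 0 < q := hq
      have : exp (-(q * x)) ≤ 1 := exp_le_one_iff.2 (by nlinarith)
      nlinarith
    · refine Eventually.of_forall fun x q hq => ?_
      have e1 : HasDerivAt (fun q : ℝ => exp (-(q * x))) (exp (-(q * x)) * (-(1 * x))) q :=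
        (((hasDerivAt_id q).mul_const x).neg).exp
      convert e1.const_sub 1 using 1
      ring
  set w : ℝ → ℝ := fun q => Q q / q + c * q ^ (1 - α) with hw
  have hwpos : ∀ q, 0 < q → 0 < w q := by
    intro q hq
    have := hQ q hq
    simp only [hw]; positivity
  have hwd : ∀ q, 0 < q → HasDerivAt w
      (((∫ x, x * exp (-(q * x)) ∂μ) * q - Q q * 1) / q ^ 2 + c * ((1 - α) * q ^ (1 - α - 1))) q := by
    intro q hq
    exact ((hd q hq).div (hasDerivAt_id q) hq.ne').add
      ((hasDerivAt_rpow_const (Or.inl hq.ne')).const_mul c)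
  have hwd2 : ∀ q, 0 < q → -(w q) ^ 2 ≤
      (((∫ x, x * exp (-(q * x)) ∂μ) * q - Q q * 1) / q ^ 2 + c * ((1 - α) * q ^ (1 - α - 1))) := by
    intro q hq
    have h1 : Q q - q * ∫ x, x * exp (-(q * x)) ∂μ ≤ Q q ^ 2 + 2 * ε * q ^ (2 - α) := h.lap_ineq hq
    have h2 : c * ((1 - α) * q ^ (1 - α - 1)) = 2 * ε * q ^ (2 - α) / q ^ 2 := by
      rw [show 1 - α - 1 = (2 - α) - 2 by ring, rpow_sub hq, hc]
      have : (1 - α) ≠ 0 := by linarith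
      rw [show q ^ (2:ℝ) = q ^ 2 from rpow_natCast q 2]
      field_simp
    rw [h2, ← add_div]
    have h3 : (Q q / q) ^ 2 ≤ (w q) ^ 2 := by
      have := hQ q hq
      apply pow_le_pow_left₀ (by positivity)
      simp only [hw]
      have : 0 ≤ c * q ^ (1 - α) := by positivity
      linarith
    have h4 : -(Q q / q) ^ 2 ≤ ((∫ x, x * exp (-(q * x)) ∂μ) * q - Q q * 1 + 2 * ε * q ^ (2 - α)) / q ^ 2 := by
      rw [div_pow, ← neg_div]
      gcongr
      linarith
    linarith
  have hanti : AntitoneOn (fun q => (w q)⁻¹ - q) (Ioi 0) := by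
    have hdd : ∀ q ∈ Ioi (0:ℝ), HasDerivAt (fun q => (w q)⁻¹ - q) (-(((∫ x, x * exp (-(q * x)) ∂μ) * q - Q q * 1) / q ^ 2 + c * ((1 - α) * q ^ (1 - α - 1))) / (w q) ^ 2 - 1) q := by
      intro q hq
      exact ((hwd q hq).inv (hwpos q hq).ne').sub (hasDerivAt_id q)
    apply antitoneOn_of_deriv_nonpos (convex_Ioi 0)
    · intro q hq
      exact (hdd q hq).continuousAt.continuousWithinAt
    · intro q hq
      rw [interior_Ioi] at hq
      exact (hdd q hq).differentiableAt.differentiableWithinAt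
    · intro q hq
      rw [interior_Ioi] at hq
      rw [(hdd q hq).deriv, sub_nonpos, div_le_one (by have := hwpos q hq; positivity)]
      have := hwd2 q hq
      linarith
  have hlim : Tendsto (fun q => Q q / q) (nhdsWithin 0 (Ioi 0)) (nhds 1) := by
    rw [← h.int_one]
    have e : ∀ q, Q q / q = ∫ x, (1 - exp (-(q * x))) / q ∂μ := fun q => by
      rw [integral_div]
    simp_rw [e]
    apply tendsto_integral_filter_of_dominated_convergence (fun x => x)
    · exact Eventually.of_forall fun q => by fun_prop
    · filter_upwards [self_mem_nhdsWithin] with q hq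
      filter_upwards [h.pos] with x hx
      have hq' : 0 < q := hq
      have : exp (-(q * x)) ≤ 1 := exp_le_one_iff.2 (by nlinarith)
      rw [norm_of_nonneg (div_nonneg (by linarith) hq'.le), div_le_iff₀ hq']
      have := add_one_le_exp (-(q * x))
      linarith
    · exact h.int_id
    · refine Eventually.of_forall fun x => ?_
      have e1 : HasDerivAt (fun q : ℝ => exp (-(q * x))) (exp (-(0 * x)) * (-(1 * x))) 0 :=
        (((hasDerivAt_id 0).mul_const x).neg).exp
      have e2 := (e1.const_sub 1)
      have e3 := (hasDerivAt_iff_tendsto_slope.1 e2).mono_left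
        (nhdsWithin_mono 0 (show Ioi (0:ℝ) ⊆ {0}ᶜ from fun y (hy : 0 < y) => hy.ne'))
      have e4 : -(exp (-(0 * x)) * (-(1 * x))) = x := by simp
      rw [e4] at e3
      refine e3.congr fun q => ?_
      simp [slope_def_field]
  have hr : (w L)⁻¹ - L ≤ 1 := by
    have hlim2 : Tendsto (fun q => (Q q / q)⁻¹) (nhdsWithin 0 (Ioi 0)) (nhds 1) := by
      have := hlim.inv₀ one_ne_zero
      rwa [inv_one] at this
    apply ge_of_tendsto hlim2
    have ev1 := hlim.eventually (lt_mem_nhds (show (0:ℝ) < 1 by norm_num))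
    have ev2 : ∀ᶠ q in nhdsWithin (0:ℝ) (Ioi 0), q < L := mem_nhdsWithin_of_mem_nhds (gt_mem_nhds hL)
    filter_upwards [ev1, ev2, self_mem_nhdsWithin] with q h1 h2 h3
    have h3' : 0 < q := h3
    have := hanti h3 hL h2.le
    simp only at this
    have h5 : (w q)⁻¹ ≤ (Q q / q)⁻¹ := by
      apply inv_anti₀ h1
      simp only [hw]
      have : 0 ≤ c * q ^ (1 - α) := by positivity
      linarith
    linarith
  have h6 : 1 / (1 + L) ≤ w L := by
    have hp := hwpos L hL
    rw [div_le_iff₀ (by linarith)]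
    have : (w L)⁻¹ * w L = 1 := inv_mul_cancel₀ hp.ne'
    nlinarith
  have h7 : w L * L = Q L + c * L ^ (2 - α) := by
    simp only [hw]
    rw [show 2 - α = (1 - α) + 1 by ring, rpow_add hL, rpow_one]
    field_simp
  have h8 : 1 / (1 + L) * L ≤ w L * L := by gcongr
  rw [h7] at h8
  have : L / (1 + L) = 1 / (1 + L) * L := by ring
  change _ ≤ Q L
  linarith

lemma Core.tail_lower (h : Core α ε k μ) {L δ : ℝ} (hL : 0 < L) (hδ : 0 < δ) :
    L / (1 + L) - 2 * ε / (1 - α) * L ^ (2 - α) - L * δ ≤ μ.real (Ioi δ) := by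
  have hfin := h.finm
  have h1 := h.Q_lower hL
  have h2 : ∫ x, (1 - exp (-(L * x))) ∂μ ≤ ∫ x, ((Ioi δ).indicator 1 x + L * δ) ∂μ := by
    apply integral_mono_ae
    · exact (integrable_const 1).sub (h.int_exp hL.le)
    · exact ((integrable_const 1).indicator measurableSet_Ioi).add (integrable_const _)
    · filter_upwards [h.pos] with x hx
      by_cases hx' : x ∈ Ioi δ
      · rw [indicator_of_mem hx']
        have := exp_pos (-(L * x))
        simp only [Pi.one_apply]
        nlinarith [mul_pos hL hδ]
      · rw [indicator_of_notMem hx']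
        have := add_one_le_exp (-(L * x))
        simp only [mem_Ioi, not_lt] at hx'
        nlinarith
  rw [integral_add ((integrable_const 1).indicator measurableSet_Ioi) (integrable_const _),
    integral_indicator_one measurableSet_Ioi, integral_const, smul_eq_mul] at h2
  have h3 : μ.real univ ≤ 1 := ENNReal.toReal_le_of_le_ofReal (by norm_num) (by simpa using h.m0)
  have : μ.real univ * (L * δ) ≤ 1 * (L * δ) := by gcongr
  linarith

/-- First moment on `(-∞, t]`. -/
noncomputable def Umom (μ : Measure ℝ) (t : ℝ) : ℝ≥0∞ := ∫⁻ x in Iic t, ENNReal.ofReal x ∂μ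

lemma Core.U_le_one (h : Core α ε k μ) (t : ℝ) : Umom μ t ≤ 1 := by
  rw [← h.mass]; exact setLIntegral_le_lintegral _ _

lemma Core.U_step (h : Core α ε k μ) {a b δ : ℝ} (ha : 0 < a) (hab : a ≤ b) (hb : b ≤ δ) :
    Umom μ a * (1 + ENNReal.ofReal (log (b / a)) * (2 * μ (Ioi δ))) ≤ Umom μ b := by
  have := h.sf
  have hw := h.weak ((Ioo a b).indicator fun x => ENNReal.ofReal (x⁻¹))
    (Measurable.indicator (by fun_prop) measurableSet_Ioo)
  have hl : ∫⁻ x, ENNReal.ofReal (x ^ 2) *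
      (Ioo a b).indicator (fun x => ENNReal.ofReal (x⁻¹)) x ∂μ =
        ∫⁻ x in Ioo a b, ENNReal.ofReal x ∂μ := by
    rw [← lintegral_indicator measurableSet_Ioo]
    congr 1; ext x
    by_cases hx : x ∈ Ioo a b
    · rw [indicator_of_mem hx, indicator_of_mem hx, ← ENNReal.ofReal_mul (by positivity)]
      have : x ≠ 0 := (ha.trans hx.1).ne'
      congr 1; field_simp
    · rw [indicator_of_notMem hx, indicator_of_notMem hx, mul_zero]
  rw [hl] at hw
  have h1 : ∫⁻ y, ∫⁻ z, (Iic a).indicator ENNReal.ofReal y *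
      ((Ioi δ).indicator (fun _ => 2 * ENNReal.ofReal (log (b / a))) z) ∂μ ∂μ ≤
      ∫⁻ x in Ioo a b, ENNReal.ofReal x ∂μ := by
    rw [hw]
    refine mono2 μ h.pos (fun y z => _) (fun y z => _) ?_
    intro y z hy hz
    by_cases hya : y ∈ Iic a <;> by_cases hzd : z ∈ Ioi δ
    · rw [indicator_of_mem hya, indicator_of_mem hzd, mul_assoc]
      gcongr
      · exact h.klow y z hy hz
      · have e := lint_ftc log (fun x => x⁻¹) a b hab
          (fun x hx => hasDerivAt_log (ha.trans_le hx.1).ne')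
          (ContinuousOn.inv₀ continuousOn_id fun x hx => (ha.trans_le hx.1).ne')
          (fun x hx => inv_nonneg.2 (ha.trans_le hx.1).le)
        rw [log_div (ha.trans_le hab).ne' ha.ne', ← e, ← lintegral_indicator measurableSet_Ioo,
          ← lintegral_indicator measurableSet_Ioo]
        apply lintegral_mono
        intro x
        by_cases hx : x ∈ Ioo a b
        · have hx2 : x ∈ Ioo y (y + z) := by
            simp only [mem_Iic, mem_Ioi] at hya hzd
            exact ⟨hya.trans_lt hx.1, by linarith [hx.2]⟩
          rw [indicator_of_mem hx, indicator_of_mem hx2, indicator_of_mem hx]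
        · rw [indicator_of_notMem hx]; exact zero_le
    all_goals simp only [mem_Iic, mem_Ioi] at hya hzd; simp [hya, hzd]
  rw [prodint _ _ _ (ENNReal.measurable_ofReal.indicator measurableSet_Iic)
    (measurable_const.indicator measurableSet_Ioi), lintegral_indicator measurableSet_Iic,
    lintegral_indicator_const measurableSet_Ioi] at h1
  have h2 : Umom μ a + ∫⁻ x in Ioo a b, ENNReal.ofReal x ∂μ ≤ Umom μ b := by
    unfold Umom
    rw [← lintegral_union measurableSet_Ioo]
    · apply lintegral_mono_set
      intro x hx
      rcases hx with hx | hx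
      · exact le_trans hx hab
      · exact hx.2.le
    · rw [Set.disjoint_left]
      intro x hx hx2
      exact absurd hx2.1 (not_lt.2 hx)
  refine le_trans ?_ h2
  rw [mul_add, mul_one]
  gcongr
  refine le_trans (le_of_eq ?_) h1
  unfold Umom; ring

lemma Core.U_bound (h : Core α ε k μ) {δ β x : ℝ} (hx : 0 < x) (hxδ : x ≤ δ) (hβ : 0 ≤ β)
    (hβ2 : β ≤ 2 * μ.real (Ioi δ)) : (Umom μ x).toReal ≤ (x / δ) ^ β := by
  have hfin := h.finm
  have hδ : 0 < δ := hx.trans_le hxδ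
  have hU : ∀ t, Umom μ t ≠ ∞ := fun t => ((h.U_le_one t).trans_lt (by simp)).ne
  have step : ∀ a b, 0 < a → a ≤ b → b ≤ δ →
      (Umom μ a).toReal * (1 + log (b / a) * β) ≤ (Umom μ b).toReal := by
    intro a b ha hab hb
    have h1 := ENNReal.toReal_mono (hU b) (h.U_step ha hab hb)
    have hl : 0 ≤ log (b / a) := log_nonneg ((one_le_div ha).2 hab)
    rw [ENNReal.toReal_mul, ENNReal.toReal_add (by simp) (by finiteness), ENNReal.toReal_mul,
      ENNReal.toReal_mul, ENNReal.toReal_ofReal hl] at h1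
    refine le_trans ?_ h1
    simp only [ENNReal.toReal_one, ENNReal.toReal_ofNat]
    gcongr
    exact hβ2
  set l := log (δ / x) with hl
  have hl0 : 0 ≤ l := log_nonneg ((one_le_div hx).2 hxδ)
  have key : ∀ n : ℕ, 0 < n → (Umom μ x).toReal * (1 + (β * l) / n) ^ n ≤ 1 := by
    intro n hn
    have hn' : (0:ℝ) < n := by exact_mod_cast hn
    have ind : ∀ i : ℕ, i ≤ n → (Umom μ x).toReal * (1 + (β * l) / n) ^ i ≤
        (Umom μ (x * exp (l / n * i))).toReal := by
      intro i
      induction i with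
      | zero => intro _; simp
      | succ i ih =>
        intro hi
        have h1 := ih (by omega)
        have h2 := step (x * exp (l / n * i)) (x * exp (l / n * (i + 1 : ℕ))) (by positivity)
          (by gcongr; simp) (by
            have : l / n * (i + 1 : ℕ) ≤ l := by
              rw [div_mul_eq_mul_div, div_le_iff₀ hn']
              gcongr
            calc _ ≤ x * exp l := by gcongr
              _ = δ := by rw [hl, exp_log (by positivity)]; field_simp)
        have e : log (x * exp (l / n * (i + 1 : ℕ)) / (x * exp (l / n * i))) = l / n := by
          rw [mul_div_mul_left _ _ hx.ne', ← exp_sub, log_exp]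
          push_cast; ring
        rw [e] at h2
        refine le_trans ?_ h2
        rw [pow_succ, ← mul_assoc]
        have e2 : 1 + β * l / n = 1 + l / n * β := by ring
        rw [← e2]
        gcongr
    refine (ind n le_rfl).trans ?_
    exact ENNReal.toReal_le_of_le_ofReal (by norm_num) (by simpa using h.U_le_one _)
  have hlim := (tendsto_one_add_div_pow_exp (β * l)).const_mul (Umom μ x).toReal
  have hle : (Umom μ x).toReal * exp (β * l) ≤ 1 := by
    apply le_of_tendsto hlim
    filter_upwards [eventually_gt_atTop 0] with n hn using key n hn
  have e : (x / δ) ^ β = exp (-(β * l)) := by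
    rw [rpow_def_of_pos (by positivity), hl, ← inv_div, log_inv]; congr 1; ring
  rw [e, exp_neg, ← one_div, le_div_iff₀ (exp_pos _)]
  exact hle

lemma Core.U_bound' (h : Core α ε k μ) {δ β : ℝ} (hδ : 0 < δ) (hβ : 0 ≤ β)
    (hβ2 : β ≤ 2 * μ.real (Ioi δ)) (x : ℝ) (hx : 0 < x) :
    Umom μ x ≤ ENNReal.ofReal (δ ^ (-β) * x ^ β) := by
  have hU : ∀ t, Umom μ t ≠ ∞ := fun t => ((h.U_le_one t).trans_lt (by simp)).ne
  have e : δ ^ (-β) * x ^ β = (x / δ) ^ β := by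
    rw [div_rpow hx.le hδ.le, rpow_neg hδ.le]; ring
  rw [e]
  by_cases hxδ : x ≤ δ
  · rw [← ENNReal.ofReal_toReal (hU x)]
    exact ENNReal.ofReal_le_ofReal (h.U_bound hx hxδ hβ hβ2)
  · refine (h.U_le_one x).trans ?_
    rw [← ENNReal.ofReal_one]
    apply ENNReal.ofReal_le_ofReal
    exact one_le_rpow ((one_le_div hδ).2 (not_le.1 hxδ).le) hβ

lemma lint_rpow {r x : ℝ} (hr : -1 < r) (hx : 0 < x) :
    ∫⁻ t in Ioo 0 x, ENNReal.ofReal (t ^ r) = ENNReal.ofReal (x ^ (r + 1) / (r + 1)) := by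
  have hi := intervalIntegral.intervalIntegrable_rpow' (a := 0) (b := x) hr
  have e := integral_rpow (a := 0) (b := x) (r := r) (Or.inl hr)
  rw [zero_rpow (by linarith), sub_zero] at e
  rw [← e, intervalIntegral.integral_of_le hx.le, ofReal_integral_eq_lintegral_ofReal]
  · exact setLIntegral_congr Ioo_ae_eq_Ioc
  · exact (intervalIntegrable_iff_integrableOn_Ioc_of_le hx.le).1 hi
  · exact (ae_restrict_iff' measurableSet_Ioc).2 (ae_of_all _ fun x hx => rpow_nonneg hx.1.le _)

lemma Core.neg_mom (h : Core α ε k μ) {C β s : ℝ} (hC : 0 ≤ C) (hs : 0 < s) (hsβ : s < β)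
    (hU : ∀ t, 0 < t → Umom μ t ≤ ENNReal.ofReal (C * t ^ β)) (x : ℝ) (hx : 0 < x) :
    ∫⁻ y in Iic x, ENNReal.ofReal (y ^ (-s)) * ENNReal.ofReal y ∂μ ≤
      ENNReal.ofReal (C * (1 + s / (β - s)) * x ^ (β - s)) := by
  have := h.sf
  have hbs : 0 < β - s := by linarith
  set T : ℝ → ℝ → ℝ≥0∞ := fun y t => ({p : ℝ × ℝ | p.1 < p.2}.indicator
    (fun p => ENNReal.ofReal p.1 * ENNReal.ofReal (s * p.2 ^ (-s - 1)))) (y, t) with hT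
  have hTm : Measurable (fun p : ℝ × ℝ => T p.1 p.2) := by
    refine Measurable.indicator ?_ (measurableSet_lt measurable_fst measurable_snd)
    fun_prop
  have h1 : ∀ᵐ y ∂(μ.restrict (Iic x)), ENNReal.ofReal (y ^ (-s)) * ENNReal.ofReal y =
      ENNReal.ofReal (x ^ (-s)) * ENNReal.ofReal y + ∫⁻ t in Ioo 0 x, T y t := by
    filter_upwards [ae_restrict_of_ae h.pos, ae_restrict_mem measurableSet_Iic] with y hy hyx
    have hyx' : y ≤ x := hyx
    have e1 : ∫⁻ t in Ioo 0 x, T y t =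
        ENNReal.ofReal y * ENNReal.ofReal (-(x ^ (-s)) - - (y ^ (-s))) := by
      rw [← lint_ftc (fun t => -(t ^ (-s))) (fun t => s * t ^ (-s - 1)) y x hyx,
        ← lintegral_const_mul _ (by fun_prop), ← lintegral_indicator measurableSet_Ioo,
          ← lintegral_indicator measurableSet_Ioo]
      · congr 1; ext t
        simp only [hT, indicator, mem_Ioo, mem_setOf_eq]
        by_cases h2 : y < t
        · have : 0 < t := hy.trans h2
          simp [h2, this]
        · simp [h2]
      · intro t ht
        have : t ≠ 0 := (hy.trans_le ht.1).ne'
        refine (hasDerivAt_rpow_const (p := -s) (Or.inl this)).neg.congr_deriv ?_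
        ring
      · intro t ht
        have : t ≠ 0 := (hy.trans_le ht.1).ne'
        exact ((continuousAt_id.rpow_const (Or.inl this)).const_mul s).continuousWithinAt
      · intro t ht
        have : 0 < t := (hy.trans_le ht.1)
        positivity
    have hmono : x ^ (-s) ≤ y ^ (-s) := rpow_le_rpow_of_nonpos hy hyx' (by linarith)
    rw [e1, mul_comm (ENNReal.ofReal y), ← add_mul, ← ENNReal.ofReal_add (by positivity) (by linarith)]
    congr 2; ring
  rw [lintegral_congr_ae h1, lintegral_add_left (by fun_prop), lintegral_const_mul _ (by fun_prop),
    lintegral_lintegral_swap hTm.aemeasurable]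
  have h2 : ∫⁻ t in Ioo 0 x, ∫⁻ y in Iic x, T y t ∂μ ≤
      ENNReal.ofReal (C * (s / (β - s)) * x ^ (β - s)) := by
    calc _ ≤ ∫⁻ t in Ioo 0 x, ENNReal.ofReal (C * s) * ENNReal.ofReal (t ^ (β - s - 1)) := by
          apply setLIntegral_mono' measurableSet_Ioo
          intro t ht
          have ht0 := ht.1
          calc _ ≤ ∫⁻ y, (Iic t).indicator ENNReal.ofReal y * ENNReal.ofReal (s * t ^ (-s - 1)) ∂μ := by
                refine (setLIntegral_le_lintegral _ _).trans ?_
                apply lintegral_mono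
                intro y
                simp only [hT, indicator, mem_setOf_eq, mem_Iic]
                by_cases h2 : y < t
                · simp [h2, h2.le]
                · simp [h2]
            _ = Umom μ t * ENNReal.ofReal (s * t ^ (-s - 1)) := by
                rw [lintegral_mul_const _ (ENNReal.measurable_ofReal.indicator measurableSet_Iic),
                  lintegral_indicator measurableSet_Iic]
                rfl
            _ ≤ ENNReal.ofReal (C * t ^ β) * ENNReal.ofReal (s * t ^ (-s - 1)) := by
                gcongr; exact hU t ht.1
            _ = _ := by
                rw [← ENNReal.ofReal_mul (by positivity), ← ENNReal.ofReal_mul (by positivity)]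
                congr 1
                rw [show β - s - 1 = β + (-s - 1) by ring, rpow_add ht.1]; ring
      _ = _ := by
          rw [lintegral_const_mul _ (by fun_prop), lint_rpow (by linarith) hx,
            ← ENNReal.ofReal_mul (by positivity)]
          congr 1
          rw [show β - s - 1 + 1 = β - s by ring]
          ring
  calc _ ≤ ENNReal.ofReal (x ^ (-s)) * ENNReal.ofReal (C * x ^ β) +
        ENNReal.ofReal (C * (s / (β - s)) * x ^ (β - s)) := by
        gcongr; exact hU x hx
    _ = _ := by
        rw [← ENNReal.ofReal_mul (by positivity), ← ENNReal.ofReal_add (by positivity) (by positivity)]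
        congr 1
        rw [show β - s = -s + β by ring, rpow_add hx]
        ring

lemma Core.mom_le_two (h : Core α ε k μ) {s : ℝ} (h0 : 0 ≤ s) (h1 : s ≤ 1) :
    ∫⁻ x, ENNReal.ofReal (x ^ s) ∂μ ≤ 2 := by
  calc _ ≤ ∫⁻ x, (1 + ENNReal.ofReal x) ∂μ := by
        apply lintegral_mono_ae
        filter_upwards [h.pos] with x hx
        rw [← ENNReal.ofReal_one, ← ENNReal.ofReal_add (by norm_num) hx.le]
        exact ENNReal.ofReal_le_ofReal (rpow_le_one_add hx h0 h1)
    _ = μ univ + 1 := by rw [lintegral_add_left (by fun_prop), h.mass]; simp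
    _ ≤ 1 + 1 := by gcongr; exact h.m0
    _ = 2 := by norm_num

lemma Core.neg_alpha (h : Core α ε k μ) {C β : ℝ} (hC : 0 ≤ C) (hsβ : 1 + α < β)
    (hU : ∀ t, 0 < t → Umom μ t ≤ ENNReal.ofReal (C * t ^ β)) :
    ∫⁻ y, ENNReal.ofReal (y ^ (-α)) ∂μ ≤
      ENNReal.ofReal (C * (1 + (1 + α) / (β - (1 + α))) + 1) := by
  have hα0 := h.hα0
  have hb : 0 < β - (1 + α) := by linarith
  have h1 := h.neg_mom hC (by linarith : 0 < 1 + α) hsβ hU 1 one_pos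
  rw [one_rpow, mul_one] at h1
  calc _ ≤ ∫⁻ y, ((Iic 1).indicator (fun y => ENNReal.ofReal (y ^ (-(1 + α))) * ENNReal.ofReal y) y + 1) ∂μ := by
        apply lintegral_mono_ae
        filter_upwards [h.pos] with y hy
        by_cases h2 : y ∈ Iic 1
        · rw [indicator_of_mem h2, ← ENNReal.ofReal_mul (by positivity)]
          have : y ^ (-(1 + α)) * y = y ^ (-α) := by
            rw [show -α = -(1 + α) + 1 by ring, rpow_add hy, rpow_one]
          rw [this]; exact le_self_add
        · rw [indicator_of_notMem h2, zero_add, ← ENNReal.ofReal_one]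
          apply ENNReal.ofReal_le_ofReal
          simp only [mem_Iic, not_le] at h2
          exact rpow_le_one_of_one_le_of_nonpos h2.le (by linarith)
    _ = (∫⁻ y in Iic 1, ENNReal.ofReal (y ^ (-(1 + α))) * ENNReal.ofReal y ∂μ) + μ univ := by
        rw [lintegral_add_right _ measurable_const, lintegral_indicator measurableSet_Iic]; simp
    _ ≤ _ := by
        rw [ENNReal.ofReal_add (by positivity) (by norm_num), ENNReal.ofReal_one]
        gcongr
        exact h.m0

/-- The right-hand side of the profile equation. -/
noncomputable def Ffun (k : ℝ → ℝ → ℝ≥0∞) (μ : Measure ℝ) (x : ℝ) : ℝ≥0∞ :=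
  ∫⁻ y, ∫⁻ z, {p : ℝ × ℝ | p.1 < x ∧ x < p.1 + p.2}.indicator
    (fun p => ENNReal.ofReal p.1 * k p.1 p.2) (y, z) ∂μ ∂μ

lemma Core.F_small (h : Core α ε k μ) (hε1 : ε ≤ 1) {C β : ℝ} (hC : 0 ≤ C) (hsβ : 1 + α < β)
    (hU : ∀ t, 0 < t → Umom μ t ≤ ENNReal.ofReal (C * t ^ β)) (x : ℝ) (hx : 0 < x) (hx1 : x ≤ 1) :
    Ffun k μ x ≤ ENNReal.ofReal ((2 * C + C * (C * (1 + (1 + α) / (β - (1 + α))) + 1) +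
      2 * (C * (1 + α / (β - α)))) * x ^ (β - α)) := by
  have hα0 := h.hα0
  have hα1 := h.hα1
  have hb : 0 < β - (1 + α) := by linarith
  have hb2 : 0 < β - α := by linarith
  have hneg := h.neg_alpha hC hsβ hU
  set D := C * (1 + (1 + α) / (β - (1 + α))) + 1 with hD
  have hD0 : 0 ≤ D := by positivity
  have hnm := h.neg_mom hC hα0 (by linarith : α < β) hU x hx
  have hpow : x ^ β ≤ x ^ (β - α) := rpow_le_rpow_of_exponent_ge hx hx1 (by linarith)
  have hU' : Umom μ x ≤ ENNReal.ofReal (C * x ^ (β - α)) :=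
    (hU x hx).trans (ENNReal.ofReal_le_ofReal (by gcongr))
  have m1 : Measurable ((Iic x).indicator fun y : ℝ => 2 * ENNReal.ofReal y) :=
    Measurable.indicator (by fun_prop) measurableSet_Iic
  have m2 : Measurable ((Iic x).indicator ENNReal.ofReal) :=
    Measurable.indicator (by fun_prop) measurableSet_Iic
  have m3 : Measurable ((Iic x).indicator fun y : ℝ => ENNReal.ofReal (y ^ (-α)) * ENNReal.ofReal y) :=
    Measurable.indicator (by fun_prop) measurableSet_Iic
  calc Ffun k μ x ≤ ∫⁻ y, ∫⁻ z, ((Iic x).indicator (fun y => 2 * ENNReal.ofReal y) y * 1 +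
        ((Iic x).indicator ENNReal.ofReal y * ENNReal.ofReal (z ^ (-α)) +
         (Iic x).indicator (fun y => ENNReal.ofReal (y ^ (-α)) * ENNReal.ofReal y) y *
          ENNReal.ofReal (z ^ α))) ∂μ ∂μ := by
        unfold Ffun
        refine mono2 μ h.pos (fun y z => _) (fun y z => _) ?_
        intro y z hy hz
        by_cases hp : (y, z) ∈ {p : ℝ × ℝ | p.1 < x ∧ x < p.1 + p.2}
        · rw [indicator_of_mem hp]
          have hyx : y ∈ Iic x := hp.1.le
          have hyx' : y ≤ x := hyx
          rw [indicator_of_mem hyx, indicator_of_mem hyx, indicator_of_mem hyx]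
          simp only
          calc _ ≤ ENNReal.ofReal y * (2 + 1 * (1 * ENNReal.ofReal (z ^ (-α)) +
              ENNReal.ofReal (y ^ (-α)) * ENNReal.ofReal (z ^ α))) := by
                gcongr
                refine (h.kup' y z hy hz).trans ?_
                gcongr
                · exact ENNReal.ofReal_le_one.2 hε1
                · exact ENNReal.ofReal_le_one.2 (rpow_le_one hy.le (by linarith) hα0.le)
            _ = _ := by ring
        · rw [indicator_of_notMem hp]; exact zero_le
    _ = 2 * Umom μ x * μ univ + (Umom μ x * (∫⁻ z, ENNReal.ofReal (z ^ (-α)) ∂μ) +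
        (∫⁻ y in Iic x, ENNReal.ofReal (y ^ (-α)) * ENNReal.ofReal y ∂μ) *
          (∫⁻ z, ENNReal.ofReal (z ^ α) ∂μ)) := by
        have E : ∀ y, ∫⁻ z, ((Iic x).indicator (fun y => 2 * ENNReal.ofReal y) y * 1 +
        ((Iic x).indicator ENNReal.ofReal y * ENNReal.ofReal (z ^ (-α)) +
         (Iic x).indicator (fun y => ENNReal.ofReal (y ^ (-α)) * ENNReal.ofReal y) y *
          ENNReal.ofReal (z ^ α))) ∂μ = (Iic x).indicator (fun y => 2 * ENNReal.ofReal y) y * μ univ +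
        ((Iic x).indicator ENNReal.ofReal y * (∫⁻ z, ENNReal.ofReal (z ^ (-α)) ∂μ) +
         (Iic x).indicator (fun y => ENNReal.ofReal (y ^ (-α)) * ENNReal.ofReal y) y *
          (∫⁻ z, ENNReal.ofReal (z ^ α) ∂μ)) := by
          intro y
          rw [lintegral_add_left (by fun_prop), lintegral_add_left (by fun_prop),
            lintegral_const_mul _ (by fun_prop), lintegral_const_mul _ (by fun_prop),
            lintegral_const_mul _ (by fun_prop), lintegral_one]
        simp_rw [E]
        rw [lintegral_add_left (by fun_prop), lintegral_add_left (by fun_prop),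
          lintegral_mul_const _ m1, lintegral_mul_const _ m2, lintegral_mul_const _ m3,
          lintegral_indicator measurableSet_Iic, lintegral_indicator measurableSet_Iic,
          lintegral_indicator measurableSet_Iic, lintegral_const_mul _ (by fun_prop)]
        rfl
    _ ≤ 2 * ENNReal.ofReal (C * x ^ (β - α)) * 1 + (ENNReal.ofReal (C * x ^ (β - α)) * ENNReal.ofReal D +
        ENNReal.ofReal (C * (1 + α / (β - α)) * x ^ (β - α)) * 2) := by
        gcongr
        · exact h.m0
        · exact h.mom_le_two hα0.le hα1.le
    _ = _ := by
        rw [← ENNReal.ofReal_ofNat 2, mul_one, ← ENNReal.ofReal_mul (by positivity),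
          ← ENNReal.ofReal_mul (by positivity), ← ENNReal.ofReal_mul (by positivity),
          ← ENNReal.ofReal_add (by positivity) (by positivity),
          ← ENNReal.ofReal_add (by positivity) (by positivity)]
        congr 1; ring


lemma Core.k_max (h : Core α ε k μ) (hε1 : ε ≤ 1) {y z : ℝ} (hz : 0 < z) (hzy : z ≤ y) :
    k y z ≤ ENNReal.ofReal (4 * (y ^ α * z ^ (-α))) := by
  have hy : 0 < y := hz.trans_le hzy
  refine (h.kup y z hy hz).trans (ENNReal.ofReal_le_ofReal ?_)
  have hα0 := h.hα0
  have hε := h.hε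
  have h1 : 1 ≤ (y / z) ^ α := one_le_rpow ((one_le_div hz).2 hzy) hα0.le
  have h2 : (z / y) ^ α ≤ 1 := rpow_le_one (by positivity) ((div_le_one hy).2 hzy) hα0.le
  have h3 : 0 ≤ (z / y) ^ α := by positivity
  have e : y ^ α * z ^ (-α) = (y / z) ^ α := by
    rw [div_rpow hy.le hz.le, rpow_neg hz.le]; rfl
  rw [e]
  nlinarith

lemma Core.mom_step (h : Core α ε k μ) (hε1 : ε ≤ 1) {p : ℝ} (hp : 1 ≤ p)
    (hfin : ∫⁻ x, ENNReal.ofReal (x ^ p) ∂μ < ∞) :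
    ∫⁻ x, ENNReal.ofReal (x ^ (p + (1 - α))) ∂μ < ∞ := by
  have := h.sf
  have hα0 := h.hα0
  have hα1 := h.hα1
  set q := p - α with hq
  have hq0 : 0 < q := by linarith
  have hw := h.weak (fun x => ENNReal.ofReal (x ^ (q - 1))) (by fun_prop)
  have hl : ∫⁻ x, ENNReal.ofReal (x ^ 2) * ENNReal.ofReal (x ^ (q - 1)) ∂μ =
      ∫⁻ x, ENNReal.ofReal (x ^ (p + (1 - α))) ∂μ := by
    apply lintegral_congr_ae
    filter_upwards [h.pos] with x hx
    rw [← ENNReal.ofReal_mul (by positivity), ← rpow_natCast, ← rpow_add hx]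
    congr 2; push_cast; linarith
  rw [← hl, hw]
  set c := 4 * 2 ^ q * (1 + 1 / q) with hc
  have key : ∀ y z, 0 < y → 0 < z → ENNReal.ofReal y * k y z *
      (∫⁻ x in Ioo y (y + z), ENNReal.ofReal (x ^ (q - 1))) ≤
      ENNReal.ofReal c * (ENNReal.ofReal (y ^ p) * ENNReal.ofReal (z ^ (1 - α)) +
        ENNReal.ofReal (y ^ (1 - α)) * ENNReal.ofReal (z ^ p)) := by
    intro y z hy hz
    rcases le_total z y with hzy | hyz
    · have h1 : ∫⁻ x in Ioo y (y + z), ENNReal.ofReal (x ^ (q - 1)) ≤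
          ENNReal.ofReal (2 ^ q * y ^ (q - 1) * z) := by
        calc _ ≤ ∫⁻ x in Ioo y (y + z), ENNReal.ofReal (2 ^ q * y ^ (q - 1)) := by
              apply setLIntegral_mono measurable_const
              intro x hx
              apply ENNReal.ofReal_le_ofReal
              have hx0 : 0 < x := hy.trans hx.1
              rcases le_total 1 q with h1 | h1
              · calc x ^ (q - 1) ≤ (2 * y) ^ (q - 1) :=
                      rpow_le_rpow hx0.le (by linarith [hx.2]) (by linarith)
                  _ = 2 ^ (q - 1) * y ^ (q - 1) := mul_rpow (by norm_num) hy.le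
                  _ ≤ _ := by
                      gcongr
                      · norm_num
                      · linarith
              · calc x ^ (q - 1) ≤ y ^ (q - 1) :=
                      rpow_le_rpow_of_nonpos hy hx.1.le (by linarith)
                  _ = 1 * y ^ (q - 1) := (one_mul _).symm
                  _ ≤ _ := by
                      gcongr
                      exact one_le_rpow (by norm_num) hq0.le
          _ = _ := by
              rw [setLIntegral_const, volume_Ioo, ← ENNReal.ofReal_mul (by positivity)]
              congr 2; ring
      calc _ ≤ ENNReal.ofReal y * ENNReal.ofReal (4 * (y ^ α * z ^ (-α))) *
            ENNReal.ofReal (2 ^ q * y ^ (q - 1) * z) := by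
            gcongr
            exact h.k_max hε1 hz hzy
        _ = ENNReal.ofReal (4 * 2 ^ q) * (ENNReal.ofReal (y ^ p) * ENNReal.ofReal (z ^ (1 - α))) := by
            rw [← ENNReal.ofReal_mul (by positivity), ← ENNReal.ofReal_mul (by positivity),
              ← ENNReal.ofReal_mul (by positivity), ← ENNReal.ofReal_mul (by positivity)]
            congr 1
            have e1 : y ^ p = y * y ^ α * y ^ (q - 1) := by
              rw [mul_assoc, ← rpow_add hy, ← rpow_one_add' hy.le]
              · congr 1; rw [hq]; ring
              · rw [hq]; intro hh; linarith
            have e2 : z ^ (1 - α) = z * z ^ (-α) := by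
              rw [← rpow_one_add' hz.le]
              · congr 1
              · intro hh; linarith
            rw [e1, e2]; ring
        _ ≤ _ := by
            gcongr
            · rw [hc]
              have : 0 < 1 / q := by positivity
              nlinarith [show (0:ℝ) < 2 ^ q by positivity]
            · exact le_self_add
    · have h1 : ∫⁻ x in Ioo y (y + z), ENNReal.ofReal (x ^ (q - 1)) ≤
          ENNReal.ofReal (2 ^ q * z ^ q * (1 / q)) := by
        rw [lint_ftc (fun x => x ^ q / q) (fun x => x ^ (q - 1)) y (y + z) (by linarith)]
        · apply ENNReal.ofReal_le_ofReal
          have : 0 ≤ y ^ q / q := by positivity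
          have h2 : (y + z) ^ q / q ≤ 2 ^ q * z ^ q * (1 / q) := by
            rw [← mul_rpow (by norm_num) hz.le, mul_one_div]
            gcongr
            linarith
          linarith
        · intro x hx
          have hx0 : 0 < x := hy.trans_le hx.1
          have := (hasDerivAt_rpow_const (x := x) (p := q) (Or.inl hx0.ne')).div_const q
          rw [mul_div_cancel_left₀ _ hq0.ne'] at this
          exact this
        · intro x hx
          have hx0 : 0 < x := hy.trans_le hx.1
          exact (continuousAt_rpow_const _ _ (Or.inl hx0.ne')).continuousWithinAt
        · intro x hx
          have hx0 : 0 < x := hy.trans_le hx.1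
          positivity
      calc _ ≤ ENNReal.ofReal y * ENNReal.ofReal (4 * (z ^ α * y ^ (-α))) *
            ENNReal.ofReal (2 ^ q * z ^ q * (1 / q)) := by
            gcongr
            rw [h.ksymm]
            exact h.k_max hε1 hy hyz
        _ = ENNReal.ofReal (4 * 2 ^ q * (1 / q)) * (ENNReal.ofReal (y ^ (1 - α)) * ENNReal.ofReal (z ^ p)) := by
            rw [← ENNReal.ofReal_mul (by positivity), ← ENNReal.ofReal_mul (by positivity),
              ← ENNReal.ofReal_mul (by positivity), ← ENNReal.ofReal_mul (by positivity)]
            congr 1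
            have e1 : z ^ p = z ^ α * z ^ q := by
              rw [← rpow_add hz]
              congr 1; rw [hq]; ring
            have e2 : y ^ (1 - α) = y * y ^ (-α) := by
              rw [← rpow_one_add' hy.le]
              · congr 1
              · intro hh; linarith
            rw [e1, e2]; ring
        _ ≤ _ := by
            gcongr
            · rw [hc]
              have : 0 < 1 / q := by positivity
              nlinarith [show (0:ℝ) < 2 ^ q by positivity]
            · exact le_add_self
  refine (mono2 μ h.pos (fun y z => _) (fun y z => _) key).trans_lt ?_
  have hm := h.mom_le_two (s := 1 - α) (by linarith) (by linarith)
  have hm' : ∫⁻ x, ENNReal.ofReal (x ^ (1 - α)) ∂μ < ∞ := hm.trans_lt (by simp)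
  have e : ∫⁻ y, ∫⁻ z, ENNReal.ofReal c * (ENNReal.ofReal (y ^ p) * ENNReal.ofReal (z ^ (1 - α)) +
        ENNReal.ofReal (y ^ (1 - α)) * ENNReal.ofReal (z ^ p)) ∂μ ∂μ =
      ENNReal.ofReal c * ((∫⁻ x, ENNReal.ofReal (x ^ p) ∂μ) * (∫⁻ x, ENNReal.ofReal (x ^ (1 - α)) ∂μ) +
       (∫⁻ x, ENNReal.ofReal (x ^ (1 - α)) ∂μ) * (∫⁻ x, ENNReal.ofReal (x ^ p) ∂μ)) := by
    rw [← prodint _ _ _ (by fun_prop) (by fun_prop), ← prodint _ _ _ (by fun_prop) (by fun_prop),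
      ← lintegral_add_left, ← lintegral_const_mul]
    · congr 1; ext y
      rw [← lintegral_add_left (by fun_prop), ← lintegral_const_mul _ (by fun_prop)]
    · apply Measurable.add
      · apply Measurable.lintegral_prod_right' (f := fun p' : ℝ × ℝ => ENNReal.ofReal (p'.1 ^ p) * ENNReal.ofReal (p'.2 ^ (1 - α)))
        fun_prop
      · apply Measurable.lintegral_prod_right' (f := fun p' : ℝ × ℝ => ENNReal.ofReal (p'.1 ^ (1 - α)) * ENNReal.ofReal (p'.2 ^ p))
        fun_prop
    · apply Measurable.lintegral_prod_right' (f := fun p' : ℝ × ℝ => ENNReal.ofReal (p'.1 ^ p) * ENNReal.ofReal (p'.2 ^ (1 - α)))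
      fun_prop
  rw [e]
  finiteness

lemma Core.mom_all (h : Core α ε k μ) (hε1 : ε ≤ 1) (n : ℕ) :
    ∫⁻ x, ENNReal.ofReal (x ^ n) ∂μ < ∞ := by
  have hf := h.finm
  have hα1 := h.hα1
  have h1 : ∀ j : ℕ, ∫⁻ x, ENNReal.ofReal (x ^ (1 + j * (1 - α))) ∂μ < ∞ := by
    intro j
    induction j with
    | zero =>
      have := h.mass
      simp [this]
    | succ j ih =>
      have := h.mom_step hε1 (p := 1 + j * (1 - α)) (by have : (0:ℝ) ≤ j * (1 - α) := mul_nonneg (by positivity) (by linarith)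
                                                        linarith) ih
      have e : (1:ℝ) + ((j + 1 : ℕ) : ℝ) * (1 - α) = 1 + j * (1 - α) + (1 - α) := by
        push_cast; ring
      rw [e]; exact this
  obtain ⟨j, hj⟩ := exists_nat_ge (n / (1 - α))
  rw [div_le_iff₀ (by linarith)] at hj
  calc _ ≤ ∫⁻ x, (1 + ENNReal.ofReal (x ^ (1 + j * (1 - α)))) ∂μ := by
        apply lintegral_mono_ae
        filter_upwards [h.pos] with x hx
        rw [← ENNReal.ofReal_one, ← ENNReal.ofReal_add (by norm_num) (by positivity)]
        apply ENNReal.ofReal_le_ofReal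
        have h0 : 0 < x ^ (1 + j * (1 - α)) := by positivity
        rcases le_total x 1 with hx1 | hx1
        · have := pow_le_one₀ (n := n) hx.le hx1
          linarith
        · have := rpow_le_rpow_of_exponent_le hx1 (show (n:ℝ) ≤ 1 + j * (1 - α) by linarith)
          rw [rpow_natCast] at this
          linarith
    _ < ∞ := by
        rw [lintegral_add_left measurable_const]
        simp only [lintegral_one]
        have := h1 j
        finiteness


noncomputable def ee (n : ℕ) (x : ℝ) : ℝ := |x| ^ n / (n.factorial : ℝ)

noncomputable def mm (μ : Measure ℝ) (n : ℕ) : ℝ := ∫ x, ee n x ∂μ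

lemma ee_nonneg (n : ℕ) (x : ℝ) : 0 ≤ ee n x := by unfold ee; positivity

lemma ee_meas (n : ℕ) : Measurable (ee n) := by unfold ee; fun_prop

lemma Core.ee_int (h : Core α ε k μ) (hε1 : ε ≤ 1) (n : ℕ) : Integrable (ee n) μ := by
  have : Integrable (fun x : ℝ => |x| ^ n) μ := by
    refine ⟨by fun_prop, ?_⟩
    rw [hasFiniteIntegral_iff_ofReal (ae_of_all _ fun x => by positivity)]
    refine lt_of_eq_of_lt ?_ (h.mom_all hε1 n)
    apply lintegral_congr_ae
    filter_upwards [h.pos] with x hx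
    rw [abs_of_pos hx]
  exact this.div_const _

lemma ee_binom (N : ℕ) {y z : ℝ} (hy : 0 < y) (hz : 0 < z) :
    ((y + z) ^ (N + 2) - y ^ (N + 2) - z ^ (N + 2)) / ((N + 2).factorial : ℝ) =
      ∑ p ∈ Finset.HasAntidiagonal.antidiagonal N, ee (p.1 + 1) y * ee (p.2 + 1) z := by
  have h1 : (y + z) ^ (N + 2) / ((N + 2).factorial : ℝ) =
      ∑ p ∈ Finset.HasAntidiagonal.antidiagonal (N + 2), ee p.1 y * ee p.2 z := by
    rw [(Commute.all y z).add_pow', Finset.sum_div]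
    apply Finset.sum_congr rfl
    rintro ⟨i, j⟩ hp
    rw [Finset.HasAntidiagonal.mem_antidiagonal] at hp
    simp only at hp ⊢
    rw [← hp, Nat.choose_symm_add, nsmul_eq_mul]
    have e := Nat.add_choose_mul_factorial_mul_factorial i j
    have e' : (((i + j).choose j : ℕ) : ℝ) * (i.factorial : ℝ) * (j.factorial : ℝ) = ((i + j).factorial : ℝ) := by
      exact_mod_cast e
    unfold ee
    rw [abs_of_pos hy, abs_of_pos hz, ← e']
    have := Nat.factorial_pos i
    have := Nat.factorial_pos j
    have : 0 < (i + j).choose j := Nat.choose_pos (by omega)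
    field_simp
  rw [Finset.Nat.antidiagonal_succ_succ'] at h1
  simp only [Finset.sum_cons, Finset.sum_map, Function.Embedding.prodMap, Function.Embedding.coeFn_mk,
    Prod.map] at h1
  rw [sub_div, sub_div, h1]
  unfold ee
  rw [abs_of_pos hy, abs_of_pos hz]
  simp
  ring

lemma ee_shift (i j : ℕ) {y z : ℝ} (hy : 0 < y) (hz : 0 < z) :
    (y / z) * (ee (i + 1) y * ee (j + 1) z) / ((i + j : ℕ) + 1 : ℝ) ≤ 2 * (ee (i + 2) y * ee j z) := by
  have e : (y / z) * (ee (i + 1) y * ee (j + 1) z) =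
      ((i + 2 : ℝ) / (j + 1)) * (ee (i + 2) y * ee j z) := by
    unfold ee
    rw [abs_of_pos hy, abs_of_pos hz, Nat.factorial_succ (i + 1), Nat.factorial_succ j]
    have := Nat.factorial_pos (i + 1)
    have := Nat.factorial_pos j
    push_cast
    field_simp
    ring
  rw [e, mul_div_right_comm]
  have h0 := mul_nonneg (ee_nonneg (i + 2) y) (ee_nonneg j z)
  apply mul_le_mul_of_nonneg_right _ h0
  rw [div_div, div_le_iff₀ (by positivity)]
  push_cast
  nlinarith [show (0:ℝ) ≤ i by positivity, show (0:ℝ) ≤ j by positivity, show (0:ℝ) ≤ i * j by positivity,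
    show (0:ℝ) ≤ j * j by positivity]

lemma W_simple {r s : ℝ} (hr : 0 < r) (h0 : 0 ≤ s) (h1 : s ≤ 1) : r ^ s ≤ 1 + r :=
  rpow_le_one_add hr h0 h1

lemma Core.pt_bound (h : Core α ε k μ) (N : ℕ) (y z : ℝ) (hy : 0 < y) (hz : 0 < z) :
    ENNReal.ofReal y * k y z * (∫⁻ x in Ioo y (y + z), ENNReal.ofReal (x ^ N / ((N + 2).factorial : ℝ))) ≤
    ENNReal.ofReal (∑ p ∈ Finset.HasAntidiagonal.antidiagonal N, ((2 + 2 * ε) * (ee (p.1 + 1) y * ee (p.2 + 1) z) +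
      2 * ε * (ee (p.1 + 2) y * ee p.2 z) + 2 * ε * (ee p.1 y * ee (p.2 + 2) z))) := by
  have hε := h.hε
  have hα0 := h.hα0
  have hα1 := h.hα1
  have hk : k y z ≤ ENNReal.ofReal (2 + ε * (2 + y / z + z / y)) := by
    refine (h.kup y z hy hz).trans (ENNReal.ofReal_le_ofReal ?_)
    have h1 := rpow_le_one_add (div_pos hy hz) hα0.le hα1.le
    have h2 := rpow_le_one_add (div_pos hz hy) hα0.le hα1.le
    nlinarith
  have hN : (0:ℝ) < N + 1 := by positivity
  have hin : ∫⁻ x in Ioo y (y + z), ENNReal.ofReal (x ^ N / ((N + 2).factorial : ℝ)) =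
      ENNReal.ofReal (((y + z) ^ (N + 1) - y ^ (N + 1)) / (N + 1) / ((N + 2).factorial : ℝ)) := by
    rw [lint_ftc (fun x => x ^ (N + 1) / (N + 1) / ((N + 2).factorial : ℝ)) (fun x => x ^ N / ((N + 2).factorial : ℝ)) y (y + z) (by linarith)]
    · congr 1; ring
    · intro x hx
      have := ((hasDerivAt_pow (N + 1) x).div_const (N + 1 : ℝ)).div_const ((N + 2).factorial : ℝ)
      push_cast at this
      rw [mul_div_cancel_left₀ _ hN.ne'] at this
      exact this
    · fun_prop
    · intro x hx
      have : 0 < x := hy.trans_le hx.1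
      positivity
  rw [hin]
  have hS := ee_binom N hy hz
  set S := ∑ p ∈ Finset.HasAntidiagonal.antidiagonal N, ee (p.1 + 1) y * ee (p.2 + 1) z with hSdef
  have hfac : (0:ℝ) < (N + 2).factorial := by exact_mod_cast Nat.factorial_pos _
  have hpow : y ^ (N + 1) ≤ (y + z) ^ (N + 1) := pow_le_pow_left₀ hy.le (by linarith) _
  have hpow2 : z ^ (N + 1) ≤ (y + z) ^ (N + 1) := pow_le_pow_left₀ hz.le (by linarith) _
  have hmain : y * (((y + z) ^ (N + 1) - y ^ (N + 1)) / (N + 1) / ((N + 2).factorial : ℝ)) ≤ S / (N + 1) := by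
    rw [← hS]
    rw [div_right_comm _ (N + 1 : ℝ), ← mul_div_assoc, ← mul_div_assoc]
    gcongr
    rw [pow_succ (y + z) (N + 1), pow_succ y (N + 1), pow_succ z (N + 1)]
    nlinarith
  calc _ ≤ ENNReal.ofReal y * ENNReal.ofReal (2 + ε * (2 + y / z + z / y)) *
        ENNReal.ofReal (((y + z) ^ (N + 1) - y ^ (N + 1)) / (N + 1) / ((N + 2).factorial : ℝ)) := by
        gcongr
    _ = ENNReal.ofReal ((2 + ε * (2 + y / z + z / y)) *
        (y * (((y + z) ^ (N + 1) - y ^ (N + 1)) / (N + 1) / ((N + 2).factorial : ℝ)))) := by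
        rw [← ENNReal.ofReal_mul (by positivity), ← ENNReal.ofReal_mul (by positivity)]
        congr 1; ring
    _ ≤ ENNReal.ofReal ((2 + ε * (2 + y / z + z / y)) * (S / (N + 1))) := by
        gcongr
    _ ≤ _ := by
        apply ENNReal.ofReal_le_ofReal
        rw [hSdef, Finset.sum_div, Finset.mul_sum]
        apply Finset.sum_le_sum
        rintro ⟨i, j⟩ hp
        rw [Finset.HasAntidiagonal.mem_antidiagonal] at hp
        simp only at hp ⊢
        have a1 := ee_shift i j hy hz
        have a2 := ee_shift j i hz hy
        rw [hp] at a1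
        rw [add_comm j i, hp] at a2
        have a0 : ee (i + 1) y * ee (j + 1) z / (N + 1) ≤ ee (i + 1) y * ee (j + 1) z := by
          apply div_le_self
          · exact mul_nonneg (ee_nonneg _ _) (ee_nonneg _ _)
          · linarith [show (0:ℝ) ≤ N by positivity]
        have e : (2 + ε * (2 + y / z + z / y)) * (ee (i + 1) y * ee (j + 1) z / (N + 1)) =
          (2 + 2 * ε) * (ee (i + 1) y * ee (j + 1) z / (N + 1)) +
          ε * (y / z * (ee (i + 1) y * ee (j + 1) z) / (N + 1)) +
          ε * (z / y * (ee (j + 1) z * ee (i + 1) y) / (N + 1)) := by ring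
        rw [e]
        have b0 := mul_le_mul_of_nonneg_left a0 (by positivity : 0 ≤ 2 + 2 * ε)
        have b1 := mul_le_mul_of_nonneg_left a1 hε.le
        have b2 := mul_le_mul_of_nonneg_left a2 hε.le
        linarith

lemma Core.mm_rec0 (h : Core α ε k μ) (hε1 : ε ≤ 1) (N : ℕ) :
    mm μ (N + 2) ≤ ∑ p ∈ Finset.HasAntidiagonal.antidiagonal N, ((2 + 2 * ε) * (mm μ (p.1 + 1) * mm μ (p.2 + 1)) +
      2 * ε * (mm μ (p.1 + 2) * mm μ p.2) + 2 * ε * (mm μ p.1 * mm μ (p.2 + 2))) := by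
  have := h.finm
  have hε := h.hε
  have I : ∀ i j, Integrable (fun p : ℝ × ℝ => ee i p.1 * ee j p.2) (μ.prod μ) := fun i j =>
    (h.ee_int hε1 i).mul_prod (h.ee_int hε1 j)
  have J : ∀ i j, ∫ p : ℝ × ℝ, ee i p.1 * ee j p.2 ∂(μ.prod μ) = mm μ i * mm μ j := fun i j =>
    integral_prod_mul _ _
  set R : ℝ × ℝ → ℝ := fun q => ∑ p ∈ Finset.HasAntidiagonal.antidiagonal N, ((2 + 2 * ε) * (ee (p.1 + 1) q.1 * ee (p.2 + 1) q.2) +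
      2 * ε * (ee (p.1 + 2) q.1 * ee p.2 q.2) + 2 * ε * (ee p.1 q.1 * ee (p.2 + 2) q.2)) with hR
  have hRi' : ∀ p : ℕ × ℕ, Integrable (fun q : ℝ × ℝ => (2 + 2 * ε) * (ee (p.1 + 1) q.1 * ee (p.2 + 1) q.2) +
      2 * ε * (ee (p.1 + 2) q.1 * ee p.2 q.2) + 2 * ε * (ee p.1 q.1 * ee (p.2 + 2) q.2)) (μ.prod μ) := fun p =>
    (((I _ _).const_mul _).add ((I _ _).const_mul _)).add ((I _ _).const_mul _)
  have hRi : Integrable R (μ.prod μ) := integrable_finsetSum _ fun p _ => hRi' p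
  have hR0 : ∀ q, 0 ≤ R q := fun q => Finset.sum_nonneg fun p _ => by
    have := ee_nonneg
    have := fun i j => mul_nonneg (ee_nonneg i q.1) (ee_nonneg j q.2)
    exact add_nonneg (add_nonneg (mul_nonneg (by positivity) (this _ _))
      (mul_nonneg (by positivity) (this _ _))) (mul_nonneg (by positivity) (this _ _))
  have hRint : ∫ q, R q ∂(μ.prod μ) = ∑ p ∈ Finset.HasAntidiagonal.antidiagonal N, ((2 + 2 * ε) * (mm μ (p.1 + 1) * mm μ (p.2 + 1)) +
      2 * ε * (mm μ (p.1 + 2) * mm μ p.2) + 2 * ε * (mm μ p.1 * mm μ (p.2 + 2))) := by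
    rw [hR, integral_finsetSum _ fun p _ => hRi' p]
    apply Finset.sum_congr rfl
    intro p _
    have I2 : Integrable (fun q : ℝ × ℝ => (2 + 2 * ε) * (ee (p.1 + 1) q.1 * ee (p.2 + 1) q.2) +
      2 * ε * (ee (p.1 + 2) q.1 * ee p.2 q.2)) (μ.prod μ) :=
      ((I _ _).const_mul _).add ((I _ _).const_mul _)
    rw [integral_add I2 ((I _ _).const_mul _),
      integral_add ((I _ _).const_mul _) ((I _ _).const_mul _), integral_const_mul, integral_const_mul,
      integral_const_mul, J, J, J]
  rw [← hRint]
  have hw := h.weak (fun x => ENNReal.ofReal (x ^ N / ((N + 2).factorial : ℝ))) (by fun_prop)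
  have hl : ∫⁻ x, ENNReal.ofReal (x ^ 2) * ENNReal.ofReal (x ^ N / ((N + 2).factorial : ℝ)) ∂μ =
      ENNReal.ofReal (mm μ (N + 2)) := by
    rw [mm, ofReal_integral_eq_lintegral_ofReal (h.ee_int hε1 _) (ae_of_all _ fun x => ee_nonneg _ _)]
    apply lintegral_congr_ae
    filter_upwards [h.pos] with x hx
    rw [← ENNReal.ofReal_mul (by positivity), ee, abs_of_pos hx]
    congr 1; ring
  rw [hl] at hw
  have h1 : ENNReal.ofReal (mm μ (N + 2)) ≤ ENNReal.ofReal (∫ q, R q ∂(μ.prod μ)) := by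
    rw [hw, ofReal_integral_eq_lintegral_ofReal hRi (ae_of_all _ hR0), lintegral_prod _ hRi.aemeasurable.ennreal_ofReal]
    exact mono2 μ h.pos _ _ (h.pt_bound N)
  exact (ENNReal.ofReal_le_ofReal_iff (integral_nonneg hR0)).1 h1

lemma mm_nonneg (n : ℕ) : 0 ≤ mm μ n := integral_nonneg fun x => ee_nonneg n x

lemma Core.mm_zero (h : Core α ε k μ) : mm μ 0 ≤ 1 := by
  have := h.m0
  unfold mm ee
  simp
  rw [measureReal_def]
  exact ENNReal.toReal_le_of_le_ofReal zero_le_one (by simpa using this)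

lemma Core.mm_one (h : Core α ε k μ) : mm μ 1 = 1 := by
  rw [← h.int_one]
  apply integral_congr_ae
  filter_upwards [h.pos] with x hx
  simp [ee, abs_of_pos hx]

lemma Core.mm_rec (h : Core α ε k μ) (hε1 : ε ≤ 1 / 16) (N : ℕ) :
    mm μ (N + 2) ≤ 6 * ∑ p ∈ Finset.HasAntidiagonal.antidiagonal N, mm μ (p.1 + 1) * mm μ (p.2 + 1) := by
  have h0 := h.mm_rec0 (by linarith) N
  rw [Finset.sum_add_distrib, Finset.sum_add_distrib, ← Finset.mul_sum, ← Finset.mul_sum, ← Finset.mul_sum] at h0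
  set S := ∑ p ∈ Finset.HasAntidiagonal.antidiagonal N, mm μ (p.1 + 1) * mm μ (p.2 + 1) with hS
  have hε := h.hε
  have hm0 := h.mm_zero
  have n0 : ∀ n, 0 ≤ mm μ n := fun n => mm_nonneg n
  have hS0 : 0 ≤ S := Finset.sum_nonneg fun p _ => mul_nonneg (n0 _) (n0 _)
  have a1 : ∑ p ∈ Finset.HasAntidiagonal.antidiagonal N, mm μ (p.1 + 2) * mm μ p.2 ≤ mm μ (N + 2) + S := by
    have e1 := Finset.Nat.sum_antidiagonal_succ (n := N) (f := fun p : ℕ × ℕ => mm μ (p.1 + 1) * mm μ p.2)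
    have e2 := Finset.Nat.sum_antidiagonal_succ' (n := N) (f := fun p : ℕ × ℕ => mm μ (p.1 + 1) * mm μ p.2)
    rw [e1] at e2
    simp only at e2
    have := mul_nonneg (n0 1) (n0 (N + 1))
    have := mul_le_mul_of_nonneg_left hm0 (n0 (N + 2))
    simp only [zero_add, add_assoc, Nat.reduceAdd] at e2 hS
    nlinarith
  have a2 : ∑ p ∈ Finset.HasAntidiagonal.antidiagonal N, mm μ p.1 * mm μ (p.2 + 2) ≤ mm μ (N + 2) + S := by
    have e1 := Finset.Nat.sum_antidiagonal_succ (n := N) (f := fun p : ℕ × ℕ => mm μ p.1 * mm μ (p.2 + 1))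
    have e2 := Finset.Nat.sum_antidiagonal_succ' (n := N) (f := fun p : ℕ × ℕ => mm μ p.1 * mm μ (p.2 + 1))
    rw [e1] at e2
    simp only at e2
    have := mul_nonneg (n0 (N + 1)) (n0 1)
    have := mul_le_mul_of_nonneg_left hm0 (n0 (N + 2))
    simp only [zero_add, add_assoc, Nat.reduceAdd] at e2 hS
    nlinarith
  have b1 := mul_le_mul_of_nonneg_left a1 (by positivity : 0 ≤ 2 * ε)
  have b2 := mul_le_mul_of_nonneg_left a2 (by positivity : 0 ≤ 2 * ε)
  have := n0 (N + 2)
  nlinarith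

lemma Core.mm_cat (h : Core α ε k μ) (hε1 : ε ≤ 1 / 16) (n : ℕ) :
    mm μ (n + 1) ≤ 6 ^ n * (catalan n : ℝ) := by
  induction n using Nat.strong_induction_on with
  | _ n ih =>
    rcases n with _ | N
    · simp [h.mm_one]
    · refine (h.mm_rec hε1 N).trans ?_
      rw [catalan_succ', pow_succ']
      push_cast
      rw [mul_assoc]
      apply mul_le_mul_of_nonneg_left _ (by norm_num)
      rw [Finset.mul_sum]
      apply Finset.sum_le_sum
      intro p hp
      rw [Finset.HasAntidiagonal.mem_antidiagonal] at hp
      calc _ ≤ (6 ^ p.1 * (catalan p.1 : ℝ)) * (6 ^ p.2 * (catalan p.2 : ℝ)) := by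
            gcongr
            · exact mm_nonneg _
            · exact ih _ (by omega)
            · exact ih _ (by omega)
        _ = _ := by rw [← hp, pow_add]; ring

lemma catalan_le (n : ℕ) : catalan n ≤ 4 ^ n := by
  rw [catalan_eq_centralBinom_div]
  refine (Nat.div_le_self _ _).trans ?_
  rw [Nat.centralBinom_eq_two_mul_choose]
  refine (Nat.choose_le_two_pow _ _).trans ?_
  rw [pow_mul]; norm_num

lemma Core.mm_bound (h : Core α ε k μ) (hε1 : ε ≤ 1 / 16) (n : ℕ) : mm μ n ≤ 24 ^ n := by
  rcases n with _ | n
  · simpa using h.mm_zero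
  · refine (h.mm_cat hε1 n).trans ?_
    have : (catalan n : ℝ) ≤ 4 ^ n := by exact_mod_cast catalan_le n
    calc (6:ℝ) ^ n * catalan n ≤ 6 ^ n * 4 ^ n := by gcongr
      _ = 24 ^ n := by rw [← mul_pow]; norm_num
      _ ≤ 24 ^ (n + 1) := pow_le_pow_right₀ (by norm_num) (by omega)

lemma Core.exp_mom (h : Core α ε k μ) (hε1 : ε ≤ 1 / 16) :
    ∫⁻ x, ENNReal.ofReal (exp (x / 48)) ∂μ ≤ 2 := by
  have e : ∀ᵐ x ∂μ, ENNReal.ofReal (exp (x / 48)) = ∑' n : ℕ, ENNReal.ofReal ((1 / 48) ^ n * ee n x) := by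
    filter_upwards [h.pos] with x hx
    have hs := NormedSpace.expSeries_div_hasSum_exp (x / 48)
    rw [← Real.exp_eq_exp_ℝ] at hs
    rw [← hs.tsum_eq, ENNReal.ofReal_tsum_of_nonneg (fun n => by positivity) hs.summable]
    congr 1; ext n
    rw [ee, abs_of_pos hx]
    congr 1; rw [div_pow, div_pow]; ring
  rw [lintegral_congr_ae e, lintegral_tsum (fun n => by
    have := ee_meas n
    fun_prop)]
  have g : ∑' n : ℕ, ENNReal.ofReal ((1 / 2 : ℝ) ^ n) = 2 := by
    rw [← ENNReal.ofReal_tsum_of_nonneg (fun n => by positivity) summable_geometric_two, tsum_geometric_two]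
    simp
  rw [← g]
  apply ENNReal.tsum_le_tsum
  intro n
  rw [← ofReal_integral_eq_lintegral_ofReal ((h.ee_int (by linarith) n).const_mul _)
    (ae_of_all _ fun x => mul_nonneg (by positivity) (ee_nonneg n x)), integral_const_mul]
  apply ENNReal.ofReal_le_ofReal
  have := h.mm_bound hε1 n
  calc (1 / 48 : ℝ) ^ n * ∫ x, ee n x ∂μ ≤ (1 / 48) ^ n * 24 ^ n := by
        gcongr; exact this
    _ = (1 / 2) ^ n := by rw [← mul_pow]; norm_num


lemma poly_exp {y s : ℝ} (hy : 0 < y) (h0 : 0 ≤ s) (h2 : s ≤ 2) :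
    y ^ s * exp (y / 144) ≤ 20736 * exp (y / 48) := by
  have h1 : y ^ s ≤ 1 + y ^ 2 := by
    rcases le_total y 1 with h | h
    · have := rpow_le_one hy.le h h0
      nlinarith
    · have := rpow_le_rpow_of_exponent_le h h2
      rw [rpow_two] at this
      linarith
  have h3 := Real.quadratic_le_exp_of_nonneg (show 0 ≤ y / 72 by positivity)
  have e : exp (y / 48) = exp (y / 72) * exp (y / 144) := by
    rw [← exp_add]; congr 1; ring
  rw [e, ← mul_assoc]
  apply mul_le_mul_of_nonneg_right _ (exp_pos _).le
  nlinarith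

lemma Core.F_large (h : Core α ε k μ) (hε1 : ε ≤ 1 / 16) {M : ℝ} (hM : 0 ≤ M)
    (hneg : ∫⁻ y, ENNReal.ofReal (y ^ (-α)) ∂μ ≤ ENNReal.ofReal M) (x : ℝ) :
    Ffun k μ x ≤ ENNReal.ofReal ((20736 * 2 * ((20736 + 3) * 2 + 2 * M)) * exp (-(1 / 144 * x))) := by
  have hε := h.hε
  have hα0 := h.hα0
  have hα1 := h.hα1
  have key : ∀ y z, 0 < y → 0 < z → {p : ℝ × ℝ | p.1 < x ∧ x < p.1 + p.2}.indicator
      (fun p => ENNReal.ofReal p.1 * k p.1 p.2) (y, z) ≤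
      (ENNReal.ofReal (exp (-(1 / 144 * x))) * ENNReal.ofReal 20736 * ENNReal.ofReal (exp (y / 48))) *
       (ENNReal.ofReal (20736 + 3) * ENNReal.ofReal (exp (z / 48)) + ENNReal.ofReal 2 * ENNReal.ofReal (z ^ (-α))) := by
    intro y z hy hz
    by_cases hp : (y, z) ∈ {p : ℝ × ℝ | p.1 < x ∧ x < p.1 + p.2}
    · rw [indicator_of_mem hp]
      have hp2 : x < y + z := hp.2
      have hk : k y z ≤ ENNReal.ofReal (2 + (y ^ α * z ^ (-α) + y ^ (-α) * z ^ α)) := by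
        refine (h.kup y z hy hz).trans (ENNReal.ofReal_le_ofReal ?_)
        have e1 : y ^ α * z ^ (-α) = (y / z) ^ α := by
          rw [div_rpow hy.le hz.le, rpow_neg hz.le]; rfl
        have e2 : y ^ (-α) * z ^ α = (z / y) ^ α := by
          rw [div_rpow hz.le hy.le, rpow_neg hy.le]; exact mul_comm _ _
        rw [e1, e2]
        have : 0 ≤ (y / z) ^ α + (z / y) ^ α := by positivity
        nlinarith
      calc _ ≤ ENNReal.ofReal y * ENNReal.ofReal (2 + (y ^ α * z ^ (-α) + y ^ (-α) * z ^ α)) := by gcongr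
        _ = ENNReal.ofReal (y * (2 + (y ^ α * z ^ (-α) + y ^ (-α) * z ^ α))) := by
            rw [ENNReal.ofReal_mul hy.le]
        _ ≤ ENNReal.ofReal ((exp (-(1 / 144 * x)) * 20736 * exp (y / 48)) *
          ((20736 + 3) * exp (z / 48) + 2 * z ^ (-α))) := by
            apply ENNReal.ofReal_le_ofReal
            have hx : 1 ≤ exp (-(1 / 144 * x)) * (exp (y / 144) * exp (z / 144)) := by
              rw [← exp_add, ← exp_add]
              apply one_le_exp; linarith
            have p1 := poly_exp hy (s := 1) (by norm_num) (by norm_num)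
            have p2 := poly_exp hy (s := 1 + α) (by linarith) (by linarith)
            have p3 := poly_exp hy (s := 1 - α) (by linarith) (by linarith)
            have q1 := poly_exp hz (s := α) (by linarith) (by linarith)
            have q2 : exp (z / 144) ≤ exp (z / 48) := exp_le_exp.2 (by linarith)
            have q3 : z ^ (-α) * exp (z / 144) ≤ 2 * z ^ (-α) + exp (z / 48) := by
              have hz0 : 0 < z ^ (-α) := by positivity
              rcases le_total z 1 with hz1 | hz1
              · have : exp (z / 144) ≤ 2 := by
                  calc exp (z / 144) ≤ exp (1 / 2) := exp_le_exp.2 (by linarith)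
                    _ ≤ 2 := by
                      have h1 : exp (1 / 2) * exp (1 / 2) = exp 1 := by rw [← exp_add]; norm_num
                      have h2 := exp_one_lt_d9
                      have h3 := exp_pos (1 / 2)
                      nlinarith
                nlinarith [exp_pos (z / 48)]
              · have : z ^ (-α) ≤ 1 := rpow_le_one_of_one_le_of_nonpos hz1 (by linarith)
                nlinarith [exp_pos (z / 144)]
            have ey1 : y ^ (1 + α) = y * y ^ α := rpow_one_add' hy.le (by linarith)
            have ey2 : y ^ (1 - α) = y * y ^ (-α) := by
              rw [sub_eq_add_neg]; exact rpow_one_add' hy.le (by linarith)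
            rw [rpow_one] at p1
            have hB : 0 ≤ y * (2 + (y ^ α * z ^ (-α) + y ^ (-α) * z ^ α)) := by positivity
            calc y * (2 + (y ^ α * z ^ (-α) + y ^ (-α) * z ^ α)) ≤
                (exp (-(1 / 144 * x)) * (exp (y / 144) * exp (z / 144))) *
                  (y * (2 + (y ^ α * z ^ (-α) + y ^ (-α) * z ^ α))) := le_mul_of_one_le_left hB hx
              _ = exp (-(1 / 144 * x)) * ((y * exp (y / 144)) * (2 * exp (z / 144)) +
                  (y ^ (1 + α) * exp (y / 144)) * (z ^ (-α) * exp (z / 144)) +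
                  (y ^ (1 - α) * exp (y / 144)) * (z ^ α * exp (z / 144))) := by
                  rw [ey1, ey2]; ring
              _ ≤ exp (-(1 / 144 * x)) * ((20736 * exp (y / 48)) * (2 * exp (z / 48)) +
                  (20736 * exp (y / 48)) * (2 * z ^ (-α) + exp (z / 48)) +
                  (20736 * exp (y / 48)) * (20736 * exp (z / 48))) := by gcongr
              _ = _ := by ring
        _ = _ := by
            rw [ENNReal.ofReal_mul (by positivity), ENNReal.ofReal_mul (by positivity),
              ENNReal.ofReal_mul (by positivity), ENNReal.ofReal_add (by positivity) (by positivity),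
              ENNReal.ofReal_mul (by positivity), ENNReal.ofReal_mul (by positivity)]
    · rw [indicator_of_notMem hp]; exact zero_le
  unfold Ffun
  refine (mono2 μ h.pos (fun y z => _) (fun y z => _) key).trans ?_
  rw [prodint _ _ _ (by fun_prop) (by fun_prop), lintegral_const_mul _ (by fun_prop),
    lintegral_add_left (by fun_prop), lintegral_const_mul _ (by fun_prop), lintegral_const_mul _ (by fun_prop)]
  have hE := h.exp_mom hε1
  have e : ENNReal.ofReal ((20736 * 2 * ((20736 + 3) * 2 + 2 * M)) * exp (-(1 / 144 * x))) =
      ENNReal.ofReal (exp (-(1 / 144 * x))) * ENNReal.ofReal 20736 * 2 *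
       (ENNReal.ofReal (20736 + 3) * 2 + ENNReal.ofReal 2 * ENNReal.ofReal M) := by
    rw [← ENNReal.ofReal_ofNat 2, ← ENNReal.ofReal_mul (by positivity), ← ENNReal.ofReal_mul (by positivity),
      ← ENNReal.ofReal_mul (by positivity), ← ENNReal.ofReal_mul (by positivity),
      ← ENNReal.ofReal_add (by positivity) (by positivity), ← ENNReal.ofReal_mul (by positivity)]
    congr 1; ring
  rw [e]
  gcongr


lemma set3_meas : MeasurableSet {q : ℝ × ℝ × ℝ | q.2.1 < q.1 ∧ q.1 < q.2.1 + q.2.2} := by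
  have h1 : MeasurableSet {q : ℝ × ℝ × ℝ | q.2.1 < q.1} := measurableSet_lt (by fun_prop) (by fun_prop)
  have h2 : MeasurableSet {q : ℝ × ℝ × ℝ | q.1 < q.2.1 + q.2.2} := measurableSet_lt (by fun_prop) (by fun_prop)
  exact h1.inter h2

lemma set2_meas (x : ℝ) : MeasurableSet {p : ℝ × ℝ | p.1 < x ∧ x < p.1 + p.2} := by
  have h1 : MeasurableSet {p : ℝ × ℝ | p.1 < x} := measurableSet_lt (by fun_prop) (by fun_prop)
  have h2 : MeasurableSet {p : ℝ × ℝ | x < p.1 + p.2} := measurableSet_lt (by fun_prop) (by fun_prop)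
  exact h1.inter h2

lemma Ffun_tonelli (μ : Measure ℝ) [SFinite μ] (hk : Measurable (fun p : ℝ × ℝ => k p.1 p.2))
    (g : ℝ → ℝ≥0∞) (hg : Measurable g) :
    ∫⁻ x, Ffun k μ x * g x =
      ∫⁻ y, ∫⁻ z, ENNReal.ofReal y * k y z * (∫⁻ x in Ioo y (y + z), g x) ∂μ ∂μ := by
  set H : ℝ × ℝ × ℝ → ℝ≥0∞ := fun q => {q : ℝ × ℝ × ℝ | q.2.1 < q.1 ∧ q.1 < q.2.1 + q.2.2}.indicator
    (fun q => ENNReal.ofReal q.2.1 * k q.2.1 q.2.2 * g q.1) q with hH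
  have hset : MeasurableSet {q : ℝ × ℝ × ℝ | q.2.1 < q.1 ∧ q.1 < q.2.1 + q.2.2} := set3_meas
  have hHm : Measurable H := by
    refine Measurable.indicator ?_ hset
    have : Measurable (fun q : ℝ × ℝ × ℝ => k q.2.1 q.2.2) := hk.comp measurable_snd
    fun_prop
  have e1 : ∀ x y z, {p : ℝ × ℝ | p.1 < x ∧ x < p.1 + p.2}.indicator
      (fun p => ENNReal.ofReal p.1 * k p.1 p.2) (y, z) * g x = H (x, y, z) := by
    intro x y z
    simp only [hH, indicator_apply, mem_ofPred_eq]
    split_ifs <;> simp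
  have m2 : ∀ x, Measurable (fun p : ℝ × ℝ => {p : ℝ × ℝ | p.1 < x ∧ x < p.1 + p.2}.indicator
      (fun p => ENNReal.ofReal p.1 * k p.1 p.2) p) := by
    intro x
    refine Measurable.indicator (by fun_prop) ?_
    exact set2_meas x
  have e2 : ∀ x, Ffun k μ x * g x = ∫⁻ y, ∫⁻ z, H (x, y, z) ∂μ ∂μ := by
    intro x
    unfold Ffun
    rw [← lintegral_mul_const _ (m2 x).lintegral_prod_right']
    congr 1; ext y
    have m5 : Measurable (fun z => {p : ℝ × ℝ | p.1 < x ∧ x < p.1 + p.2}.indicator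
      (fun p => ENNReal.ofReal p.1 * k p.1 p.2) (y, z)) := (m2 x).comp measurable_prodMk_left
    rw [← lintegral_mul_const _ m5]
    congr 1; ext z
    exact e1 x y z
  simp_rw [e2]
  have m3 : Measurable (fun p : ℝ × ℝ => ∫⁻ z, H (p.1, p.2, z) ∂μ) := by
    apply Measurable.lintegral_prod_right' (f := fun q : (ℝ × ℝ) × ℝ => H (q.1.1, q.1.2, q.2))
    fun_prop
  rw [lintegral_lintegral_swap m3.aemeasurable]
  congr 1; ext y
  have m4 : Measurable (fun p : ℝ × ℝ => H (p.1, y, p.2)) := by fun_prop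
  rw [lintegral_lintegral_swap m4.aemeasurable]
  congr 1; ext z
  rw [← lintegral_indicator measurableSet_Ioo, ← lintegral_const_mul _ (hg.indicator measurableSet_Ioo)]
  congr 1; ext x
  simp only [hH, indicator_apply, mem_ofPred_eq, mem_Ioo]
  split_ifs <;> simp

structure PreCore (α ε : ℝ) (k : ℝ → ℝ → ℝ≥0∞) (f : ℝ → ℝ≥0∞) : Prop where
  hα0 : 0 < α
  hα1 : α < 1
  hε : 0 < ε
  fmeas : Measurable f
  ftop : ∀ x, f x ≠ ∞
  fneg : ∀ x, x ≤ 0 → f x = 0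
  kmeas : Measurable (fun p : ℝ × ℝ => k p.1 p.2)
  ksymm : ∀ y z, k y z = k z y
  klow : ∀ y z, 0 < y → 0 < z → 2 ≤ k y z
  kup : ∀ y z, 0 < y → 0 < z → k y z ≤ ENNReal.ofReal (2 + ε * ((y / z) ^ α + (z / y) ^ α))
  mass : ∫⁻ x, f x * ENNReal.ofReal x = 1
  eqn : ∀ᵐ x, 0 < x → ENNReal.toReal (ENNReal.ofReal (x ^ 2) * f x) =
    (Ffun k (volume.withDensity f) x).toReal

variable {f : ℝ → ℝ≥0∞}

lemma PreCore.pos (h : PreCore α ε k f) : ∀ᵐ x ∂(volume.withDensity f), 0 < x := by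
  rw [ae_withDensity_iff h.fmeas]
  refine ae_of_all _ fun x hx => ?_
  by_contra hc
  exact hx (h.fneg x (not_lt.1 hc))

lemma PreCore.mass' (h : PreCore α ε k f) : ∫⁻ x, ENNReal.ofReal x ∂(volume.withDensity f) = 1 := by
  rw [lintegral_withDensity_eq_lintegral_mul _ h.fmeas (by fun_prop)]
  exact h.mass

lemma PreCore.tail_fin (h : PreCore α ε k f) {δ : ℝ} (hδ : 0 < δ) :
    (volume.withDensity f) (Ici δ) < ∞ := by
  set μ := volume.withDensity f
  have h1 := mul_meas_ge_le_lintegral (μ := μ) ENNReal.measurable_ofReal (ENNReal.ofReal δ)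
  have h3 : μ (Ici δ) ≤ μ {x | ENNReal.ofReal δ ≤ ENNReal.ofReal x} := by
    apply measure_mono
    intro x hx
    exact ENNReal.ofReal_le_ofReal hx
  rw [h.mass'] at h1
  have h4 : ENNReal.ofReal δ * μ (Ici δ) ≤ 1 := (by gcongr : _ ≤ _).trans h1
  by_contra hc
  rw [not_lt, top_le_iff] at hc
  rw [hc, ENNReal.mul_top (by simpa using hδ)] at h4
  simp at h4

/-- `y k(y,z) ≤ C z` for `y ≤ R`, `z ≥ r`. -/
lemma yk_bound (hα0 : 0 < α) (hα1 : α < 1) (hε : 0 < ε)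
    (kup : ∀ y z, 0 < y → 0 < z → k y z ≤ ENNReal.ofReal (2 + ε * ((y / z) ^ α + (z / y) ^ α)))
    {r R y z : ℝ} (hr : 0 < r) (hy : 0 < y) (hyR : y ≤ R)
    (hz : r ≤ z) :
    ENNReal.ofReal y * k y z ≤ ENNReal.ofReal ((2 * R + 2 * ε * R) / r + ε * R ^ 2 / r ^ 2 + ε) * ENNReal.ofReal z := by
  have hz0 : 0 < z := hr.trans_le hz
  have hR : 0 < R := hy.trans_le hyR
  calc _ ≤ ENNReal.ofReal y * ENNReal.ofReal (2 + ε * ((y / z) ^ α + (z / y) ^ α)) := by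
        gcongr; exact kup y z hy hz0
    _ = ENNReal.ofReal (y * (2 + ε * ((y / z) ^ α + (z / y) ^ α))) := by rw [ENNReal.ofReal_mul hy.le]
    _ ≤ ENNReal.ofReal (((2 * R + 2 * ε * R) / r + ε * R ^ 2 / r ^ 2 + ε) * z) := by
        apply ENNReal.ofReal_le_ofReal
        have h1 := rpow_le_one_add (div_pos hy hz0) hα0.le hα1.le
        have h2 := rpow_le_one_add (div_pos hz0 hy) hα0.le hα1.le
        have a1 : 1 ≤ z / r := (one_le_div hr).2 hz
        have a2 : y * (y / z) ≤ R ^ 2 / r ^ 2 * z := by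
          rw [← mul_div_assoc, div_le_iff₀ hz0]
          calc y * y ≤ R * R := by gcongr
            _ = R ^ 2 / r ^ 2 * r * r := by field_simp
            _ ≤ R ^ 2 / r ^ 2 * z * z := by gcongr
        have a3 : y * (z / y) = z := by field_simp
        have a4 : (2 + 2 * ε) * y ≤ (2 * R + 2 * ε * R) / r * z := by
          calc (2 + 2 * ε) * y ≤ (2 + 2 * ε) * R := by gcongr
            _ = (2 + 2 * ε) * R * 1 := by ring
            _ ≤ (2 + 2 * ε) * R * (z / r) := by gcongr
            _ = _ := by ring
        calc y * (2 + ε * ((y / z) ^ α + (z / y) ^ α)) ≤ y * (2 + ε * ((1 + y / z) + (1 + z / y))) := by gcongr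
          _ = (2 + 2 * ε) * y + ε * (y * (y / z)) + ε * (y * (z / y)) := by ring
          _ ≤ (2 * R + 2 * ε * R) / r * z + ε * (R ^ 2 / r ^ 2 * z) + ε * z := by
              rw [a3]; gcongr
          _ = _ := by ring
    _ = _ := by rw [ENNReal.ofReal_mul (by positivity)]

lemma PreCore.yk_le (h : PreCore α ε k f) {r R y z : ℝ} (hr : 0 < r) (hy : 0 < y) (hyR : y ≤ R)
    (hz : r ≤ z) :
    ENNReal.ofReal y * k y z ≤ ENNReal.ofReal ((2 * R + 2 * ε * R) / r + ε * R ^ 2 / r ^ 2 + ε) * ENNReal.ofReal z :=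
  yk_bound h.hα0 h.hα1 h.hε h.kup hr hy hyR hz

lemma PreCore.exists_fin (h : PreCore α ε k f) {r : ℝ} (hr : 0 < r) :
    ∃ x, 0 < x ∧ x < r ∧ Ffun k (volume.withDensity f) x < ∞ := by
  by_contra! hc
  have h1 : ∀ᵐ x, x < r → f x = 0 := by
    filter_upwards [h.eqn] with x hx hxr
    rcases le_or_gt x 0 with h0 | h0
    · exact h.fneg x h0
    · have h2 := hx h0
      rw [top_le_iff.1 (hc x h0 hxr)] at h2
      simp only [ENNReal.toReal_top, ENNReal.toReal_eq_zero_iff, mul_eq_zero, ENNReal.ofReal_eq_zero] at h2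
      rcases h2 with (h2 | h2) | h2
      · have : 0 < x ^ 2 := by positivity
        linarith
      · exact h2
      · exact absurd h2 (ENNReal.mul_ne_top (by simp) (h.ftop x))
  have h2 : Ffun k (volume.withDensity f) (r / 2) = 0 := by
    unfold Ffun
    rw [← lintegral_zero (μ := volume.withDensity f)]
    apply lintegral_congr_ae
    rw [EventuallyEq, ae_withDensity_iff h.fmeas]
    filter_upwards [h1] with y hy hfy
    have hyr : r ≤ y := by
      by_contra hlt
      exact hfy (hy (not_le.1 hlt))
    rw [← lintegral_zero (μ := volume.withDensity f)]
    congr 1; ext z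
    rw [indicator_of_notMem]
    rintro ⟨a, -⟩
    simp only at a
    linarith
  have h3 := hc (r / 2) (by linarith) (by linarith)
  rw [h2] at h3
  simp at h3

noncomputable def Gset (r R : ℝ) : Set (ℝ × ℝ) := {p | p.1 ≤ R ∧ r ≤ p.2}

lemma Gset_meas (r R : ℝ) : MeasurableSet (Gset r R) := by
  have h1 : MeasurableSet {p : ℝ × ℝ | p.1 ≤ R} := measurableSet_le (by fun_prop) (by fun_prop)
  have h2 : MeasurableSet {p : ℝ × ℝ | r ≤ p.2} := measurableSet_le (by fun_prop) (by fun_prop)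
  exact h1.inter h2

lemma PreCore.G_fin (h : PreCore α ε k f) {r R : ℝ} (hr : 0 < r) :
    ∫⁻ y, ∫⁻ z, (Gset r R).indicator (fun p => ENNReal.ofReal p.1 * k p.1 p.2) (y, z)
      ∂(volume.withDensity f) ∂(volume.withDensity f) < ∞ := by
  have hfm := h.kmeas
  obtain ⟨x, hx0, hxr, hF⟩ := h.exists_fin hr
  set μ := volume.withDensity f with hμ
  set C := ENNReal.ofReal ((2 * R + 2 * ε * R) / r + ε * R ^ 2 / r ^ 2 + ε)
  have m2 : Measurable (fun p : ℝ × ℝ => {p : ℝ × ℝ | p.1 < x ∧ x < p.1 + p.2}.indicator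
      (fun p => ENNReal.ofReal p.1 * k p.1 p.2) p) := by
    refine Measurable.indicator (by fun_prop) ?_
    exact set2_meas x
  refine (mono2 μ h.pos _ (fun y z => {p : ℝ × ℝ | p.1 < x ∧ x < p.1 + p.2}.indicator
      (fun p => ENNReal.ofReal p.1 * k p.1 p.2) (y, z) +
      ((Ici x).indicator (fun _ => C) y) * ENNReal.ofReal z) ?_).trans_lt ?_
  · intro y z hy hz
    by_cases hp : (y, z) ∈ Gset r R
    · rw [indicator_of_mem hp]
      obtain ⟨h1, h2⟩ := hp
      simp only at h1 h2
      by_cases hyx : y < x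
      · rw [indicator_of_mem (show (y, z) ∈ {p : ℝ × ℝ | p.1 < x ∧ x < p.1 + p.2} from
          ⟨hyx, by simp only; linarith⟩)]
        exact le_self_add
      · rw [indicator_of_mem (show y ∈ Ici x from not_lt.1 hyx)]
        exact (h.yk_le hr hy h1 h2).trans le_add_self
    · rw [indicator_of_notMem hp]; exact zero_le
  · have e : ∫⁻ y, ∫⁻ z, ({p : ℝ × ℝ | p.1 < x ∧ x < p.1 + p.2}.indicator
      (fun p => ENNReal.ofReal p.1 * k p.1 p.2) (y, z) +
      ((Ici x).indicator (fun _ => C) y) * ENNReal.ofReal z) ∂μ ∂μ = Ffun k μ x +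
        (C * μ (Ici x)) * 1 := by
      rw [← h.mass', ← lintegral_indicator_const measurableSet_Ici,
        ← prodint _ _ _ (measurable_const.indicator measurableSet_Ici) (by fun_prop)]
      unfold Ffun
      rw [← lintegral_add_left m2.lintegral_prod_right']
      congr 1; ext y
      have m5 : Measurable (fun z => {p : ℝ × ℝ | p.1 < x ∧ x < p.1 + p.2}.indicator
        (fun p => ENNReal.ofReal p.1 * k p.1 p.2) (y, z)) := m2.comp measurable_prodMk_left
      rw [← lintegral_add_left m5]
    rw [e]
    have := h.tail_fin hx0
    have hC : C < ∞ := ENNReal.ofReal_lt_top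
    finiteness

lemma PreCore.F_int_fin (h : PreCore α ε k f) {r R : ℝ} (hr : 0 < r) (hrR : r < R) :
    ∫⁻ x in Ioo r R, Ffun k (volume.withDensity f) x < ∞ := by
  have hfm := h.kmeas
  set μ := volume.withDensity f with hμ
  have e : ∫⁻ x in Ioo r R, Ffun k μ x = ∫⁻ x, Ffun k μ x * (Ioo r R).indicator (fun _ => 1) x := by
    rw [← lintegral_indicator measurableSet_Ioo]
    congr 1; ext x
    simp only [indicator_apply]
    split_ifs <;> simp
  rw [e, Ffun_tonelli μ h.kmeas _ (measurable_const.indicator measurableSet_Ioo)]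
  set A : ℝ → ℝ → ℝ≥0∞ := fun y z => (Gset (r / 2) R).indicator (fun p => ENNReal.ofReal p.1 * k p.1 p.2) (y, z) with hA
  have hAm : Measurable (fun p : ℝ × ℝ => A p.1 p.2) := Measurable.indicator (by fun_prop) (Gset_meas _ _)
  have hAm' : Measurable (fun p : ℝ × ℝ => A p.2 p.1) := hAm.comp measurable_swap
  have hAf : ∫⁻ y, ∫⁻ z, A y z ∂μ ∂μ < ∞ := h.G_fin (by linarith)
  have hAf' : ∫⁻ y, ∫⁻ z, A z y ∂μ ∂μ < ∞ := by
    rw [lintegral_lintegral_swap hAm'.aemeasurable]; exact hAf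
  refine (mono2 μ h.pos _ (fun y z => ENNReal.ofReal (R - r) * A y z + ENNReal.ofReal R * A z y) ?_).trans_lt ?_
  · intro y z hy hz
    have l1 : ∫⁻ x in Ioo y (y + z), (Ioo r R).indicator (fun _ => (1 : ℝ≥0∞)) x ≤ ENNReal.ofReal (R - r) := by
      calc _ ≤ ∫⁻ x, (Ioo r R).indicator (fun _ => (1 : ℝ≥0∞)) x := setLIntegral_le_lintegral _ _
        _ = _ := by rw [lintegral_indicator_const measurableSet_Ioo]; simp
    have l2 : ∫⁻ x in Ioo y (y + z), (Ioo r R).indicator (fun _ => (1 : ℝ≥0∞)) x ≤ ENNReal.ofReal z := by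
      calc _ ≤ ∫⁻ x in Ioo y (y + z), (1 : ℝ≥0∞) := by
            apply lintegral_mono
            intro x
            exact indicator_le_self _ _ x
        _ = _ := by simp
    have l3 : (R ≤ y ∨ y + z ≤ r) → ∫⁻ x in Ioo y (y + z), (Ioo r R).indicator (fun _ => (1 : ℝ≥0∞)) x = 0 := by
      intro hc
      rw [← lintegral_zero (μ := volume.restrict (Ioo y (y + z)))]
      apply setLIntegral_congr_fun measurableSet_Ioo
      intro x hx
      apply indicator_of_notMem
      rintro ⟨a, b⟩
      rcases hc with hc | hc
      · linarith [hx.1]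
      · linarith [hx.2]
    by_cases hc : R ≤ y ∨ y + z ≤ r
    · rw [l3 hc, mul_zero]; exact zero_le
    · push Not at hc
      obtain ⟨c1, c2⟩ := hc
      by_cases hz2 : r / 2 ≤ z
      · have : A y z = ENNReal.ofReal y * k y z := indicator_of_mem (show (y, z) ∈ Gset (r / 2) R from ⟨c1.le, hz2⟩) _
        rw [this]
        refine le_trans ?_ le_self_add
        rw [mul_comm (ENNReal.ofReal (R - r))]
        gcongr
      · have : A z y = ENNReal.ofReal z * k z y := indicator_of_mem (show (z, y) ∈ Gset (r / 2) R from
          ⟨by simp only; linarith, by simp only; linarith⟩) _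
        rw [this, h.ksymm z y]
        refine le_trans ?_ le_add_self
        calc _ ≤ ENNReal.ofReal R * k y z * ENNReal.ofReal z := by gcongr
          _ = _ := by ring
  · have e2 : ∫⁻ y, ∫⁻ z, (ENNReal.ofReal (R - r) * A y z + ENNReal.ofReal R * A z y) ∂μ ∂μ =
        ENNReal.ofReal (R - r) * (∫⁻ y, ∫⁻ z, A y z ∂μ ∂μ) + ENNReal.ofReal R * ∫⁻ y, ∫⁻ z, A z y ∂μ ∂μ := by
      rw [← lintegral_const_mul _ hAm.lintegral_prod_right', ← lintegral_const_mul _ hAm'.lintegral_prod_right',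
        ← lintegral_add_left (hAm.lintegral_prod_right'.const_mul _)]
      congr 1; ext y
      have a1 : Measurable (A y) := hAm.comp measurable_prodMk_left
      have a2 : Measurable (fun z => A z y) := hAm'.comp measurable_prodMk_left
      rw [← lintegral_const_mul _ a1, ← lintegral_const_mul _ a2,
        ← lintegral_add_left (a1.const_mul _)]
    rw [e2]
    finiteness

lemma Ffun_meas (μ : Measure ℝ) [SFinite μ] (hk : Measurable (fun p : ℝ × ℝ => k p.1 p.2)) :
    Measurable (Ffun k μ) := by
  have hset : MeasurableSet {q : ℝ × ℝ × ℝ | q.2.1 < q.1 ∧ q.1 < q.2.1 + q.2.2} := set3_meas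
  have hHm : Measurable (fun q : (ℝ × ℝ) × ℝ => {q : ℝ × ℝ × ℝ | q.2.1 < q.1 ∧ q.1 < q.2.1 + q.2.2}.indicator
    (fun q => ENNReal.ofReal q.2.1 * k q.2.1 q.2.2) (q.1.1, q.1.2, q.2)) := by
    refine (Measurable.indicator ?_ hset).comp (by fun_prop)
    have : Measurable (fun q : ℝ × ℝ × ℝ => k q.2.1 q.2.2) := hk.comp measurable_snd
    fun_prop
  exact hHm.lintegral_prod_right'.lintegral_prod_right'

lemma PreCore.F_ae_fin (h : PreCore α ε k f) :
    ∀ᵐ x, 0 < x → Ffun k (volume.withDensity f) x < ∞ := by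
  have h1 : ∀ n : ℕ, ∀ᵐ x, x ∈ Ioo (1 / ((n:ℝ) + 2)) ((n:ℝ) + 2) → Ffun k (volume.withDensity f) x < ∞ := by
    intro n
    rw [← ae_restrict_iff' measurableSet_Ioo]
    apply ae_lt_top (Ffun_meas _ h.kmeas)
    refine (h.F_int_fin (by positivity) ?_).ne
    rw [div_lt_iff₀ (by positivity)]
    nlinarith [show (0:ℝ) ≤ n by positivity]
  filter_upwards [ae_all_iff.2 h1] with x hx hx0
  obtain ⟨n, hn⟩ := exists_nat_gt (max x (1 / x))
  apply hx n
  have a1 := (le_max_left _ _).trans_lt hn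
  have a2 := (le_max_right _ _).trans_lt hn
  refine ⟨?_, by linarith⟩
  rw [div_lt_iff₀ hx0] at a2
  rw [div_lt_iff₀ (by positivity)]
  nlinarith

lemma PreCore.eqn' (h : PreCore α ε k f) :
    ∀ᵐ x, 0 < x → ENNReal.ofReal (x ^ 2) * f x = Ffun k (volume.withDensity f) x := by
  filter_upwards [h.eqn, h.F_ae_fin] with x h1 h2 hx
  exact (ENNReal.toReal_eq_toReal_iff' (ENNReal.mul_ne_top (by simp) (h.ftop x)) (h2 hx).ne).1 (h1 hx)

lemma PreCore.core (h : PreCore α ε k f) : Core α ε k (volume.withDensity f) where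
  hα0 := h.hα0
  hα1 := h.hα1
  hε := h.hε
  pos := h.pos
  kmeas := h.kmeas
  ksymm := h.ksymm
  klow := h.klow
  kup := h.kup
  mass := h.mass'
  weak := by
    intro g hg
    rw [← Ffun_tonelli _ h.kmeas g hg, lintegral_withDensity_eq_lintegral_mul _ h.fmeas (by fun_prop)]
    apply lintegral_congr_ae
    filter_upwards [h.eqn'] with x hx
    simp only [Pi.mul_apply]
    rcases le_or_gt x 0 with h0 | h0
    · rw [h.fneg x h0, zero_mul]
      have : Ffun k (volume.withDensity f) x = 0 := by
        unfold Ffun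
        rw [← lintegral_zero (μ := volume.withDensity f)]
        apply lintegral_congr_ae
        filter_upwards [h.pos] with y hy
        rw [← lintegral_zero (μ := volume.withDensity f)]
        congr 1; ext z
        apply indicator_of_notMem
        rintro ⟨a, -⟩
        simp only at a
        linarith
      rw [this, zero_mul]
    · rw [← hx h0]; ring


open Classical in
noncomputable def kk (ε : ℝ) (W : ℝ → ℝ → ℝ) (y z : ℝ) : ℝ≥0∞ :=
  if 0 < y ∧ 0 < z then ENNReal.ofReal (Kern ε W y z) else 0

lemma kk_pos {ε : ℝ} {W : ℝ → ℝ → ℝ} {y z : ℝ} (hy : 0 < y) (hz : 0 < z) :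
    kk ε W y z = ENNReal.ofReal (Kern ε W y z) := if_pos ⟨hy, hz⟩

lemma kk_meas {W : ℝ → ℝ → ℝ} (hW : GoodW α W) :
    Measurable (fun p : ℝ × ℝ => kk ε W p.1 p.2) := by
  classical
  have hc : ContinuousOn (fun p : ℝ × ℝ => ENNReal.ofReal (Kern ε W p.1 p.2)) (Ioi 0 ×ˢ Ioi 0) := by
    unfold Kern
    have := hW.1
    exact ENNReal.continuous_ofReal.comp_continuousOn (by fun_prop)
  have hm := hc.measurable_piecewise (g := fun _ => (0 : ℝ≥0∞)) continuousOn_const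
    (measurableSet_Ioi.prod measurableSet_Ioi)
  convert hm using 1
  ext p
  simp only [kk, piecewise, mem_prod, mem_Ioi]

lemma profile_pre {W : ℝ → ℝ → ℝ} {φ : ℝ → ℝ} (hα0 : 0 < α) (hα1 : α < 1) (hW : GoodW α W)
    (hε : 0 < ε) (hφ : IsProfile (Kern ε W) φ) (hn : IsNormalised φ) :
    ∃ f, PreCore α ε (kk ε W) f ∧ ∀ᵐ x, 0 < x → f x = ENNReal.ofReal (φ x) ∧ 0 ≤ φ x := by
  obtain ⟨hloc, hpos, hxfi, heq⟩ := hφ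
  rw [ae_restrict_iff' measurableSet_Ioi] at hpos heq
  have hae : AEStronglyMeasurable φ (volume.restrict (Ioi 0)) := hloc.aestronglyMeasurable
  set f : ℝ → ℝ≥0∞ := (Ioi 0).indicator (fun x => ENNReal.ofReal (hae.mk φ x)) with hf
  have hψ := hae.stronglyMeasurable_mk.measurable
  have hfm : Measurable f := Measurable.indicator (by fun_prop) measurableSet_Ioi
  have hft : ∀ x, f x ≠ ∞ := by
    intro x
    simp only [hf, indicator_apply]
    split_ifs <;> simp
  have hf0 : ∀ x, x ≤ 0 → f x = 0 := fun x hx => indicator_of_notMem (by simpa using hx) _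
  have hfφ : ∀ᵐ x, 0 < x → f x = ENNReal.ofReal (φ x) ∧ 0 ≤ φ x := by
    have h1 := hae.ae_eq_mk
    rw [EventuallyEq, ae_restrict_iff' measurableSet_Ioi] at h1
    filter_upwards [h1, hpos] with x a b hx
    refine ⟨?_, b hx⟩
    rw [hf, indicator_of_mem (show x ∈ Ioi 0 from hx), a hx]
  have km := kk_meas (ε := ε) hW
  have kup : ∀ y z, 0 < y → 0 < z → kk ε W y z ≤ ENNReal.ofReal (2 + ε * ((y / z) ^ α + (z / y) ^ α)) := by
    intro y z hy hz
    rw [kk_pos hy hz]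
    apply ENNReal.ofReal_le_ofReal
    unfold Kern
    have := (hW.2.2.2 y z hy hz).2
    gcongr
  have kf : ∀ y z, kk ε W y z < ∞ := by
    intro y z
    unfold kk
    split_ifs <;> simp
  have K0 : ∀ y z, 0 < y → 0 < z → 0 ≤ Kern ε W y z := by
    intro y z hy hz
    unfold Kern
    have := (hW.2.2.2 y z hy hz).1
    positivity
  have hmass : ∫⁻ x, f x * ENNReal.ofReal x = 1 := by
    have e : ∫⁻ x, f x * ENNReal.ofReal x = ∫⁻ x in Ioi 0, ENNReal.ofReal (x * φ x) := by
      rw [← lintegral_indicator measurableSet_Ioi]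
      apply lintegral_congr_ae
      filter_upwards [hfφ] with x hx
      by_cases h0 : 0 < x
      · rw [indicator_of_mem (show x ∈ Ioi 0 from h0), (hx h0).1, ENNReal.ofReal_mul h0.le, mul_comm]
      · rw [indicator_of_notMem (show x ∉ Ioi 0 from h0), hf0 x (not_lt.1 h0), zero_mul]
    rw [e, ← ofReal_integral_eq_lintegral_ofReal hxfi, hn, ENNReal.ofReal_one]
    rw [EventuallyLE, ae_restrict_iff' measurableSet_Ioi]
    filter_upwards [hpos] with x hx h0
    exact mul_nonneg (le_of_lt h0) (hx h0)
  refine ⟨f, ?_, hfφ⟩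
  refine ⟨hα0, hα1, hε, hfm, hft, hf0, km, ?_, ?_, kup, hmass, ?_⟩
  · intro y z
    by_cases h : 0 < y ∧ 0 < z
    · rw [kk_pos h.1 h.2, kk_pos h.2 h.1]
      unfold Kern
      rw [hW.2.1 y z h.1 h.2]
    · unfold kk
      rw [if_neg h, if_neg (fun h' => h ⟨h'.2, h'.1⟩)]
  · intro y z hy hz
    rw [kk_pos hy hz, ← ENNReal.ofReal_ofNat 2]
    apply ENNReal.ofReal_le_ofReal
    unfold Kern
    have := (hW.2.2.2 y z hy hz).1
    have : 0 ≤ ε * W y z := by positivity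
    linarith
  · have main : ∀ x, 0 < x → ∫ y in Ioo 0 x, ∫ z in Ioi (x - y), y * Kern ε W y z * φ y * φ z =
        (Ffun (kk ε W) (volume.withDensity f) x).toReal := by
      intro x hx
      set J : ℝ × ℝ → ℝ≥0∞ := {p : ℝ × ℝ | p.1 < x ∧ x < p.1 + p.2}.indicator
        (fun p => ENNReal.ofReal p.1 * kk ε W p.1 p.2) with hJ
      have hJm : Measurable J := Measurable.indicator (by fun_prop) (set2_meas x)
      set I : ℝ → ℝ≥0∞ := fun y => ∫⁻ z, f z * J (y, z) with hI
      have hIm : Measurable I := by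
        apply Measurable.lintegral_prod_right' (f := fun p : ℝ × ℝ => f p.2 * J p)
        fun_prop
      have eF : Ffun (kk ε W) (volume.withDensity f) x = ∫⁻ y, f y * I y := by
        unfold Ffun
        have e1 : ∀ y, ∫⁻ z, J (y, z) ∂(volume.withDensity f) = I y := by
          intro y
          exact lintegral_withDensity_eq_lintegral_mul _ hfm (g := fun z => J (y, z))
            (hJm.comp measurable_prodMk_left)
        have : (fun y => ∫⁻ z, {p : ℝ × ℝ | p.1 < x ∧ x < p.1 + p.2}.indicator
            (fun p => ENNReal.ofReal p.1 * kk ε W p.1 p.2) (y, z) ∂(volume.withDensity f)) = I := by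
          ext y; exact e1 y
        rw [this, lintegral_withDensity_eq_lintegral_mul _ hfm hIm]
        rfl
      have eF2 : Ffun (kk ε W) (volume.withDensity f) x = ∫⁻ y in Ioo 0 x, f y * I y := by
        rw [eF, ← lintegral_indicator measurableSet_Ioo]
        congr 1; ext y
        by_cases hy : y ∈ Ioo 0 x
        · rw [indicator_of_mem hy]
        · rw [indicator_of_notMem hy]
          by_cases hy0 : 0 < y
          · have : I y = 0 := by
              simp only [hI]
              rw [← lintegral_zero (μ := (volume : Measure ℝ))]
              congr 1; ext z
              rw [hJ, indicator_of_notMem, mul_zero]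
              rintro ⟨a, -⟩
              exact hy ⟨hy0, a⟩
            rw [this, mul_zero]
          · rw [hf0 y (not_lt.1 hy0), zero_mul]
      have Ifin : ∀ y ∈ Ioo 0 x, I y < ∞ := by
        intro y hy
        set C := ENNReal.ofReal ((2 * y + 2 * ε * y) / (x - y) + ε * y ^ 2 / (x - y) ^ 2 + ε)
        calc I y ≤ ∫⁻ z, C * (f z * ENNReal.ofReal z) := by
              apply lintegral_mono
              intro z
              simp only [hJ]
              by_cases hp : (y, z) ∈ {p : ℝ × ℝ | p.1 < x ∧ x < p.1 + p.2}
              · rw [indicator_of_mem hp]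
                have h2 : x < y + z := hp.2
                have := yk_bound hα0 hα1 hε kup (r := x - y) (R := y) (z := z) (by linarith [hy.2]) hy.1 le_rfl (by linarith)
                calc _ ≤ f z * (C * ENNReal.ofReal z) := by gcongr
                  _ = _ := by ring
              · rw [indicator_of_notMem hp, mul_zero]; exact zero_le
          _ = C := by rw [lintegral_const_mul _ (by fun_prop), hmass, mul_one]
          _ < ∞ := ENNReal.ofReal_lt_top
      have einner : ∀ᵐ y, y ∈ Ioo 0 x → ∫ z in Ioi (x - y), y * Kern ε W y z * φ y * φ z =
          (f y * I y).toReal := by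
        filter_upwards [hfφ] with y hy hyx
        have hxy : 0 < x - y := by linarith [hyx.2]
        have a1 : ∫ z in Ioi (x - y), y * Kern ε W y z * φ y * φ z =
            ∫ z in Ioi (x - y), (f y * (f z * J (y, z))).toReal := by
          apply setIntegral_congr_ae measurableSet_Ioi
          filter_upwards [hfφ] with z hz hzx
          have hz0 : 0 < z := hxy.trans hzx
          have hJe : J (y, z) = ENNReal.ofReal y * kk ε W y z := indicator_of_mem
            (show (y, z) ∈ {p : ℝ × ℝ | p.1 < x ∧ x < p.1 + p.2} from ⟨hyx.2, by
              have : x - y < z := hzx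
              simp only; linarith⟩) _
          rw [hJe, (hy hyx.1).1, (hz hz0).1, kk_pos hyx.1 hz0]
          simp only [ENNReal.toReal_mul]
          rw [ENNReal.toReal_ofReal (hy hyx.1).2, ENNReal.toReal_ofReal (hz hz0).2,
            ENNReal.toReal_ofReal hyx.1.le, ENNReal.toReal_ofReal (K0 y z hyx.1 hz0)]
          ring
        have mz : Measurable (fun z => f z * J (y, z)) := by fun_prop
        rw [a1, integral_toReal (mz.const_mul _).aemeasurable, lintegral_const_mul _ mz]
        · congr 2
          rw [← lintegral_indicator measurableSet_Ioi]
          simp only [hI]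
          congr 1; ext z
          by_cases hz : z ∈ Ioi (x - y)
          · rw [indicator_of_mem hz]
          · rw [indicator_of_notMem hz, hJ, indicator_of_notMem, mul_zero]
            rintro ⟨-, b⟩
            apply hz
            simp only at b
            simp only [mem_Ioi]; linarith
        · refine ae_of_all _ fun z => ?_
          have : J (y, z) < ∞ := by
            simp only [hJ, indicator_apply]
            split_ifs
            · exact ENNReal.mul_lt_top ENNReal.ofReal_lt_top (kf y z)
            · simp
          exact ENNReal.mul_lt_top (hft y).lt_top (ENNReal.mul_lt_top (hft z).lt_top this)
      rw [setIntegral_congr_ae measurableSet_Ioo einner, integral_toReal (by fun_prop), eF2]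
      rw [ae_restrict_iff' measurableSet_Ioo]
      exact ae_of_all _ fun y hy => ENNReal.mul_lt_top (hft y).lt_top (Ifin y hy)
    filter_upwards [heq, hfφ] with x h1 h2 hx
    rw [← main x hx, ← h1 hx, (h2 hx).1, ENNReal.toReal_mul, ENNReal.toReal_ofReal (by positivity),
      ENNReal.toReal_ofReal (h2 hx).2]

end

theorem stmt4 (α : ℝ) (hα : α ∈ Ioo (0:ℝ) 1) (W : ℝ → ℝ → ℝ) (hW : GoodW α W)
    (ν : ℝ) (hν : ν ∈ Ioo 0 (1 - α)) :
    ∃ εν > (0:ℝ), ∃ a > (0:ℝ), ∃ C > (0:ℝ), ∀ ε : ℝ, 0 < ε → ε ≤ εν →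
      ∀ φ : ℝ → ℝ, IsProfile (Kern ε W) φ → IsNormalised φ →
        ∀ᵐ x ∂(volume.restrict (Ioi (0:ℝ))),
          φ x ≤ C * weight (-α - ν) 0 x * exp (-(a * x)) := by
  obtain ⟨hα0, hα1⟩ := hα
  obtain ⟨hν0, hν1⟩ := hν
  have hα1' : 0 < 1 - α := by linarith
  obtain ⟨β, hβ⟩ : ∃ β, β = 2 - ν := ⟨_, rfl⟩
  obtain ⟨L, hL⟩ : ∃ L, L = 6 / ν := ⟨_, rfl⟩
  have hL0 : 0 < L := by rw [hL]; positivity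
  obtain ⟨δ, hδ⟩ : ∃ δ, δ = ν / (6 * L) := ⟨_, rfl⟩
  have hδ0 : 0 < δ := by rw [hδ]; positivity
  obtain ⟨E, hE⟩ : ∃ E, E = 2 / (1 - α) * L ^ (2 - α) := ⟨_, rfl⟩
  have hE0 : 0 < E := by rw [hE]; positivity
  obtain ⟨C0, hC0⟩ : ∃ C0, C0 = δ ^ (-β) := ⟨_, rfl⟩
  have hC00 : 0 < C0 := by rw [hC0]; positivity
  have hb1 : 0 < β - (1 + α) := by rw [hβ]; linarith
  have hb2 : 0 < β - α := by linarith
  obtain ⟨M, hM⟩ : ∃ M, M = C0 * (1 + (1 + α) / (β - (1 + α))) + 1 := ⟨_, rfl⟩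
  have hM0 : 0 < M := by rw [hM]; positivity
  obtain ⟨D1, hD1⟩ : ∃ D1, D1 = 2 * C0 + C0 * (C0 * (1 + (1 + α) / (β - (1 + α))) + 1) +
      2 * (C0 * (1 + α / (β - α))) := ⟨_, rfl⟩
  have hD10 : 0 < D1 := by rw [hD1]; positivity
  obtain ⟨D2, hD2⟩ : ∃ D2 : ℝ, D2 = 20736 * 2 * ((20736 + 3) * 2 + 2 * M) := ⟨_, rfl⟩
  have hD20 : 0 < D2 := by rw [hD2]; positivity
  refine ⟨min (1 / 16) (ν / (6 * E)), by positivity, 1 / 144, by norm_num,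
    D1 * exp (1 / 144) + D2, by positivity, ?_⟩
  intro ε hε hεν φ hφ hn
  have hε1 : ε ≤ 1 / 16 := hεν.trans (min_le_left _ _)
  have hε2 : ε * E ≤ ν / 6 := by
    have := hεν.trans (min_le_right _ _)
    rw [le_div_iff₀ (by positivity)] at this
    linarith
  obtain ⟨f, hpre, hfφ⟩ := profile_pre hα0 hα1 hW hε hφ hn
  have hcore := hpre.core
  have htail := hcore.tail_lower hL0 hδ0
  have hβ2 : β ≤ 2 * (volume.withDensity f).real (Ioi δ) := by
    have t1 : 1 - ν / 6 ≤ L / (1 + L) := by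
      rw [le_div_iff₀ (by positivity), hL]
      field_simp
      nlinarith
    have t2 : 2 * ε / (1 - α) * L ^ (2 - α) ≤ ν / 6 := by
      calc 2 * ε / (1 - α) * L ^ (2 - α) = ε * E := by rw [hE]; ring
        _ ≤ _ := hε2
    have t3 : L * δ = ν / 6 := by rw [hδ]; field_simp
    rw [hβ]; linarith
  have hU := hcore.U_bound' hδ0 (by linarith : 0 ≤ β) hβ2
  rw [← hC0] at hU
  have hs := hcore.F_small (by linarith) hC00.le (by linarith) hU
  have hneg := hcore.neg_alpha hC00.le (by linarith) hU
  rw [← hM] at hneg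
  have hl := hcore.F_large hε1 hM0.le hneg
  rw [← hD2] at hl
  rw [← hD1] at hs
  rw [ae_restrict_iff' measurableSet_Ioi]
  filter_upwards [hfφ, hpre.eqn'] with x h1 h2 hx
  have hx0 : 0 < x := hx
  obtain ⟨h3, h4⟩ := h1 hx0
  have h5 := h2 hx0
  rw [h3, ← ENNReal.ofReal_mul (by positivity)] at h5
  unfold weight
  by_cases hx1 : x ≤ 1
  · rw [if_pos hx1]
    have h6 := hs x hx0 hx1
    rw [← h5, ENNReal.ofReal_le_ofReal_iff (by positivity)] at h6
    have e : x ^ (β - α) = x ^ 2 * x ^ (-α - ν) := by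
      rw [← rpow_natCast, ← rpow_add hx0, hβ]
      congr 1; push_cast; ring
    rw [e] at h6
    have h7 : φ x ≤ D1 * x ^ (-α - ν) := by
      have : x ^ 2 * φ x ≤ x ^ 2 * (D1 * x ^ (-α - ν)) := by linarith
      exact le_of_mul_le_mul_left this (by positivity)
    have h8 : 1 ≤ exp (1 / 144) * exp (-(1 / 144 * x)) := by
      rw [← exp_add]; apply one_le_exp; linarith
    have hp : 0 < x ^ (-α - ν) := by positivity
    calc φ x ≤ D1 * x ^ (-α - ν) * 1 := by linarith
      _ ≤ D1 * x ^ (-α - ν) * (exp (1 / 144) * exp (-(1 / 144 * x))) := by gcongr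
      _ = D1 * exp (1 / 144) * x ^ (-α - ν) * exp (-(1 / 144 * x)) := by ring
      _ ≤ _ := by
        gcongr
        linarith
  · rw [if_neg hx1, rpow_zero, mul_one]
    have h6 := hl x
    rw [← h5, ENNReal.ofReal_le_ofReal_iff (by positivity)] at h6
    have h7 : φ x ≤ x ^ 2 * φ x := by
      apply le_mul_of_one_le_left h4
      nlinarith [not_le.1 hx1]
    refine (h7.trans h6).trans ?_
    gcongr
    have : 0 < D1 * exp (1 / 144) := by positivity
    linarith
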